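/- arXiv:math/0602057 — 2 statements merged into one kernel-verified Lean document; each statement's English description precedes it below -/
import Mathlib

section
/- Let n ≥ 4, set ν = (n−2)/2, and let ψ ∈ C₀^∞((0,+∞)). For 0 < h ≤ 1, σ > 0 and t ∈ ℝ define K_h(σ,t) = (2π)^{-ν-1} σ^{-2ν} ∫₀^∞ e^{itλ²} ψ(h²λ²) 𝒥_ν(σλ) λ dλ, where 𝒥_ν(z) = z^ν J_ν(z) and J_ν is the Bessel function of the first kind of order ν (so that K_h(|x−y|,t) is the integral kernel of e^{itG₀}ψ(h²G₀)). Then for every 0 ≤ s ≤ (n−1)/2 there exists a constant C > 0 such that |K_h(σ,t)| ≤ C h^{s-(n-1)/2} |t|^{-s-1/2} σ^{-(n-1)/2+s} for all t ≠ 0, all σ > 0 and all 0 < h ≤ 1. -/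
/-!
Substituting `x = hλ` and putting `T = t / h²`, `ρ = σ / h`, the kernel becomes a constant times
`h^{-n}` times `g(T, ρ) = ∫ e^{iTx²} f(x) j(ρx) dx`, where `f` is smooth with compact support in
`(0, ∞)` and `j(z) = z^{-ν} J_ν(z)` up to a constant (`freeKernel_rescale`). The powers of `h` match,
so the claim is `|g(T, ρ)| ≤ C |T|^{-s-1/2} ρ^{s-(n-1)/2}`, uniformly in `T ≠ 0` and `ρ > 0`
(`claim`).

The function `j` has the Poisson representation `j(z) = ∫_{-1}^1 (1 - u²)^α cos (zu) du` with
`α = ν - 1/2` (`calJ_eq`): the power series agree, since the moments of the weight satisfy the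
recursion of the Bessel coefficients.

* Let `f` be supported in `[m, M]`. If `ρ ≤ m |T|`, the phases `Tx² ± ρux`, `|u| ≤ 1`, obtained from
  the Poisson representation have no stationary point on `[m, M]`. Integrating by parts (`nonstat`)
  gives `|g| ≤ C |T|^{-n/2}` (`claimA`), which implies the claim for every `s ≤ (n - 1)/2`.
* If `ρ ≥ m |T|`, the claim follows from its case `s = 0`, `|g| ≤ C |T|^{-1/2} ρ^{-(n-1)/2}`
  (`claimB`). That case holds for all `T` and `ρ`: `W(z) = z^{α+1} j(z)` satisfies
  `W″ = (α (α + 1) / z² - 1) W`, so `W` and `W′` are bounded on `[1, ∞)` by an energy estimate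
  (`energy_bound`), and `W = e^{iz} A_+ + e^{-iz} A_-` with `A_± = O(1)` and `A_±′ = O(1/z)`
  (`bA_bound`). The van der Corput estimate for quadratic phases (`vdc_amp`), uniform in the linear
  term `±ρx`, then gives the bound. For bounded `ρ` it applies directly to `f(x) j(ρx)`.
-/

open MeasureTheory Filter Topology Real Set

noncomputable section

/-- The Bessel function of the first kind of (real) order `ν`, for `z > 0`:
`J_ν(z) = ∑_{k≥0} (-1)^k / (k! Γ(k+ν+1)) (z/2)^{2k+ν}`. -/
def besselJ (ν : ℝ) (z : ℝ) : ℝ :=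
  ∑' k : ℕ, ((-1 : ℝ) ^ k / (Nat.factorial k * Real.Gamma ((k : ℝ) + ν + 1))) *
    (z / 2) ^ ((2 * k : ℝ) + ν)

/-- `𝒥_ν(z) = z^ν J_ν(z)`. -/
def calJ (ν : ℝ) (z : ℝ) : ℝ := z ^ ν * besselJ ν z

/-- A real-valued function of class `C₀^∞((0,+∞))`. -/
def IsCutoff (ψ : ℝ → ℝ) : Prop :=
  ContDiff ℝ (⊤ : ℕ∞) ψ ∧ HasCompactSupport ψ ∧ tsupport ψ ⊆ Set.Ioi 0

/-- The kernel `K_h(σ,t)` of the free propagator `e^{itG₀} ψ(h²G₀)` in dimension `n`,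
with `ν = (n−2)/2`:
`K_h(σ,t) = (2π)^{-ν-1} σ^{-2ν} ∫₀^∞ e^{itλ²} ψ(h²λ²) 𝒥_ν(σλ) λ dλ`. -/
def freeKernel (n : ℕ) (ψ : ℝ → ℝ) (h σ t : ℝ) : ℂ :=
  ((2 * Real.pi) ^ (-(((n : ℝ) - 2) / 2) - 1) * σ ^ (-2 * (((n : ℝ) - 2) / 2)) : ℝ) *
    ∫ lam in Set.Ioi (0 : ℝ),
      Complex.exp (Complex.I * t * lam ^ 2) * ((ψ (h ^ 2 * lam ^ 2) : ℝ) : ℂ) *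
        ((calJ (((n : ℝ) - 2) / 2) (σ * lam) : ℝ) : ℂ) * (lam : ℂ)

/-! ### The Poisson integral and the Bessel function -/

/-- The Poisson integral `j_α(z) = ∫_{-1}^1 (1 - u²)^α cos (zu) du`; up to a constant it is
`z^{-ν} J_ν(z)` with `ν = α + 1/2` (see `calJ_eq`). -/
def bj (α z : ℝ) : ℝ := ∫ u in (-1 : ℝ)..1, (1 - u ^ 2) ^ α * cos (z * u)

lemma continuous_wt {α : ℝ} (hα : 0 ≤ α) : Continuous fun u : ℝ => (1 - u ^ 2) ^ α :=
  Continuous.rpow_const (by fun_prop) fun _ => Or.inr hα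

lemma hasDerivAt_cosInt {k : ℝ → ℝ} (hk : Continuous k) (z : ℝ) :
    HasDerivAt (fun z => ∫ u in (-1 : ℝ)..1, k u * cos (z * u))
      (∫ u in (-1 : ℝ)..1, (-(k u * u)) * sin (z * u)) z := by
  refine (intervalIntegral.hasDerivAt_integral_of_dominated_loc_of_deriv_le
    (F := fun z u => k u * cos (z * u)) (F' := fun z u => (-(k u * u)) * sin (z * u))
    (bound := fun u => |k u * u|) (s := univ) univ_mem ?_ ?_ ?_ ?_ ?_ ?_).2
  · exact Eventually.of_forall fun z =>
      (by fun_prop : Continuous fun u => k u * cos (z * u)).aestronglyMeasurable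
  · exact (by fun_prop : Continuous fun u => k u * cos (z * u)).intervalIntegrable _ _
  · exact (by fun_prop : Continuous fun u => (-(k u * u)) * sin (z * u)).aestronglyMeasurable
  · refine Eventually.of_forall fun u _ z _ => ?_
    rw [norm_mul, norm_neg, Real.norm_eq_abs, Real.norm_eq_abs]
    exact mul_le_of_le_one_right (abs_nonneg _) (abs_sin_le_one _)
  · exact (by fun_prop : Continuous fun u => |k u * u|).intervalIntegrable _ _
  · refine Eventually.of_forall fun u _ z _ => ?_
    exact (((hasDerivAt_id' z).mul_const u).cos.const_mul (k u)).congr_deriv (by ring)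

lemma hasDerivAt_sinInt {k : ℝ → ℝ} (hk : Continuous k) (z : ℝ) :
    HasDerivAt (fun z => ∫ u in (-1 : ℝ)..1, k u * sin (z * u))
      (∫ u in (-1 : ℝ)..1, (k u * u) * cos (z * u)) z := by
  refine (intervalIntegral.hasDerivAt_integral_of_dominated_loc_of_deriv_le
    (F := fun z u => k u * sin (z * u)) (F' := fun z u => (k u * u) * cos (z * u))
    (bound := fun u => |k u * u|) (s := univ) univ_mem ?_ ?_ ?_ ?_ ?_ ?_).2
  · exact Eventually.of_forall fun z =>
      (by fun_prop : Continuous fun u => k u * sin (z * u)).aestronglyMeasurable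
  · exact (by fun_prop : Continuous fun u => k u * sin (z * u)).intervalIntegrable _ _
  · exact (by fun_prop : Continuous fun u => (k u * u) * cos (z * u)).aestronglyMeasurable
  · refine Eventually.of_forall fun u _ z _ => ?_
    rw [norm_mul, Real.norm_eq_abs, Real.norm_eq_abs]
    exact mul_le_of_le_one_right (abs_nonneg _) (abs_cos_le_one _)
  · exact (by fun_prop : Continuous fun u => |k u * u|).intervalIntegrable _ _
  · refine Eventually.of_forall fun u _ z _ => ?_
    exact (((hasDerivAt_id' z).mul_const u).sin.const_mul (k u)).congr_deriv (by ring)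

/-- The derivative of `bj α`, in integral form. -/
def bj1 (α z : ℝ) : ℝ := ∫ u in (-1 : ℝ)..1, (-((1 - u ^ 2) ^ α * u)) * sin (z * u)

/-- The second derivative of `bj α`, in integral form. -/
def bj2 (α z : ℝ) : ℝ := ∫ u in (-1 : ℝ)..1, (-((1 - u ^ 2) ^ α * u) * u) * cos (z * u)

lemma hasDerivAt_bj {α : ℝ} (hα : 0 ≤ α) (z : ℝ) : HasDerivAt (bj α) (bj1 α z) z :=
  hasDerivAt_cosInt (continuous_wt hα) z

lemma hasDerivAt_bj1 {α : ℝ} (hα : 0 ≤ α) (z : ℝ) : HasDerivAt (bj1 α) (bj2 α z) z :=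
  hasDerivAt_sinInt (by have := continuous_wt hα; fun_prop) z

lemma wt_mul {α : ℝ} (hα : 0 ≤ α) {u : ℝ} (hu : u ∈ uIcc (-1 : ℝ) 1) :
    (1 - u ^ 2) ^ (α + 1) = (1 - u ^ 2) ^ α * (1 - u ^ 2) := by
  rw [uIcc_of_le (by norm_num)] at hu
  exact Real.rpow_add_one' (by nlinarith [hu.1, hu.2]) (by linarith)

lemma hasDerivAt_wt {α : ℝ} (hα : 0 ≤ α) (u : ℝ) :
    HasDerivAt (fun u : ℝ => (1 - u ^ 2) ^ (α + 1)) (-(2 * (α + 1)) * ((1 - u ^ 2) ^ α * u)) u := by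
  have h := ((hasDerivAt_pow 2 u).const_sub 1).rpow_const (p := α + 1) (Or.inr (by linarith))
  convert h using 1
  simp; ring

/-- Integration by parts against `(1 - u²)^{α+1}`, which vanishes at `u = ±1`. It yields both the
Bessel equation for `bj α` and the recursion for the moments of the weight. -/
lemma wt_parts {α : ℝ} (hα : 0 ≤ α) {f f' : ℝ → ℝ} (hf : ∀ u, HasDerivAt f (f' u) u)
    (hf' : Continuous f') :
    (∫ u in (-1 : ℝ)..1, ((1 - u ^ 2) ^ α * (1 - u ^ 2)) * f' u) =
      2 * (α + 1) * ∫ u in (-1 : ℝ)..1, (1 - u ^ 2) ^ α * u * f u := by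
  have hfc : Continuous f := continuous_iff_continuousAt.2 fun u => (hf u).continuousAt
  have hw := continuous_wt hα
  have key := intervalIntegral.integral_mul_deriv_eq_deriv_mul (a := -1) (b := 1)
    (u := fun u : ℝ => (1 - u ^ 2) ^ (α + 1)) (v := f)
    (fun u _ => hasDerivAt_wt hα u) (fun u _ => hf u)
    ((by fun_prop : Continuous fun u : ℝ =>
      -(2 * (α + 1)) * ((1 - u ^ 2) ^ α * u)).intervalIntegrable _ _)
    (hf'.intervalIntegrable _ _)
  have h0 : (0 : ℝ) ^ (α + 1) = 0 := Real.zero_rpow (by linarith)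
  simp only [neg_sq, one_pow, sub_self, h0, zero_mul, zero_sub] at key
  have e : ∫ u in (-1 : ℝ)..1, (1 - u ^ 2) ^ (α + 1) * f' u =
      ∫ u in (-1 : ℝ)..1, ((1 - u ^ 2) ^ α * (1 - u ^ 2)) * f' u :=
    intervalIntegral.integral_congr fun u hu => by simp only [wt_mul hα hu]
  rw [← e, key, ← intervalIntegral.integral_neg, ← intervalIntegral.integral_const_mul]
  congr 1; ext u; ring

/-- Bessel equation for `j = bj α`: `z j″ + 2 (α + 1) j′ + z j = 0`. -/
lemma bj_ode {α : ℝ} (hα : 0 ≤ α) (z : ℝ) :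
    z * bj2 α z + 2 * (α + 1) * bj1 α z + z * bj α z = 0 := by
  have hw := continuous_wt hα
  have h := wt_parts hα (f := fun u => sin (z * u)) (f' := fun u => z * cos (z * u))
    (fun u => by
      exact ((hasDerivAt_id' u).const_mul z).sin.congr_deriv (by ring)) (by fun_prop)
  have e1 : bj1 α z = -∫ u in (-1 : ℝ)..1, (1 - u ^ 2) ^ α * u * sin (z * u) := by
    rw [bj1, ← intervalIntegral.integral_neg]; congr 1; ext u; ring
  have e2 : z * bj2 α z + z * bj α z =
      ∫ u in (-1 : ℝ)..1, ((1 - u ^ 2) ^ α * (1 - u ^ 2)) * (z * cos (z * u)) := by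
    rw [bj2, bj, ← mul_add, ← intervalIntegral.integral_add,
      ← intervalIntegral.integral_const_mul]
    · congr 1; ext u; ring
    · exact (by fun_prop : Continuous _).intervalIntegrable _ _
    · exact (by fun_prop : Continuous _).intervalIntegrable _ _
  rw [e1]; linarith

lemma abs_bj_le {α : ℝ} (hα : 0 ≤ α) : ∃ C : ℝ, ∀ z, |bj α z| ≤ C ∧ |bj1 α z| ≤ C := by
  have hw := continuous_wt hα
  obtain ⟨C, hC⟩ := (isCompact_Icc (a := (-1 : ℝ)) (b := 1)).exists_bound_of_continuousOn
    hw.continuousOn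
  have hb : ∀ u ∈ Set.uIoc (-1 : ℝ) 1, |(1 - u ^ 2) ^ α| ≤ C ∧ |u| ≤ 1 := fun u hu => by
    rw [uIoc_of_le (by norm_num)] at hu
    exact ⟨hC u ⟨hu.1.le, hu.2⟩, abs_le.2 ⟨hu.1.le, hu.2⟩⟩
  refine ⟨C * |1 - (-1)|, fun z => ⟨?_, ?_⟩⟩
  · rw [← Real.norm_eq_abs, bj]
    refine intervalIntegral.norm_integral_le_of_norm_le_const fun u hu => ?_
    rw [norm_mul]
    exact (mul_le_of_le_one_right (norm_nonneg _) (abs_cos_le_one _)).trans (hb u hu).1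
  · rw [← Real.norm_eq_abs, bj1]
    refine intervalIntegral.norm_integral_le_of_norm_le_const fun u hu => ?_
    rw [norm_mul, norm_neg, norm_mul]
    refine (mul_le_of_le_one_right (by positivity) (abs_sin_le_one _)).trans ?_
    exact (mul_le_of_le_one_right (norm_nonneg _) (hb u hu).2).trans (hb u hu).1

/-- The even moments of the weight `(1 - u²)^α` on `[-1, 1]`. -/
def moment (α : ℝ) (k : ℕ) : ℝ := ∫ u in (-1 : ℝ)..1, (1 - u ^ 2) ^ α * u ^ (2 * k)

lemma moment_succ {α : ℝ} (hα : 0 ≤ α) (k : ℕ) :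
    (2 * (k + (α + 1 / 2) + 1)) * moment α (k + 1) = (2 * k + 1) * moment α k := by
  have hw := continuous_wt hα
  have h := wt_parts hα (f := fun u => u ^ (2 * k + 1))
    (f' := fun u => (2 * k + 1) * u ^ (2 * k))
    (fun u => by simpa using hasDerivAt_pow (2 * k + 1) u) (by fun_prop)
  have e1 : moment α (k + 1) = ∫ u in (-1 : ℝ)..1, (1 - u ^ 2) ^ α * u * u ^ (2 * k + 1) := by
    rw [moment]; congr 1; ext u; ring
  have e2 : (2 * k + 1) * (moment α k - moment α (k + 1)) =
      ∫ u in (-1 : ℝ)..1, ((1 - u ^ 2) ^ α * (1 - u ^ 2)) * ((2 * k + 1) * u ^ (2 * k)) := by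
    rw [moment, moment, ← intervalIntegral.integral_sub,
      ← intervalIntegral.integral_const_mul]
    · congr 1; ext u; ring
    · exact (by fun_prop : Continuous _).intervalIntegrable _ _
    · exact (by fun_prop : Continuous _).intervalIntegrable _ _
  rw [← e1, ← e2] at h
  linarith

lemma moment_zero_pos {α : ℝ} (hα : 0 ≤ α) : 0 < moment α 0 := by
  have hw := continuous_wt hα
  refine intervalIntegral.intervalIntegral_pos_of_pos_on ?_ ?_ (by norm_num)
  · exact (by fun_prop : Continuous _).intervalIntegrable _ _
  · intro u hu
    have : 0 < 1 - u ^ 2 := by nlinarith [hu.1, hu.2]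
    simp; positivity

/-- The power series of `bj α`, from integrating the cosine series term by term. -/
lemma hasSum_bj {α : ℝ} (hα : 0 ≤ α) (z : ℝ) :
    HasSum (fun k : ℕ => (-1) ^ k * z ^ (2 * k) / (2 * k).factorial * moment α k) (bj α z) := by
  have hw := continuous_wt hα
  have hs : Summable fun k : ℕ => |z| ^ (2 * k) / (2 * k).factorial :=
    (Real.hasSum_cosh |z|).summable
  have h := intervalIntegral.hasSum_integral_of_dominated_convergence (μ := volume)
    (a := -1) (b := 1)
    (F := fun (k : ℕ) (u : ℝ) => (1 - u ^ 2) ^ α * ((-1) ^ k * (z * u) ^ (2 * k) / (2 * k).factorial))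
    (f := fun u => (1 - u ^ 2) ^ α * cos (z * u))
    (fun k u => |(1 - u ^ 2) ^ α| * (|z| ^ (2 * k) / (2 * k).factorial))
    (fun k => (by fun_prop : Continuous _).aestronglyMeasurable)
    (fun k => Eventually.of_forall fun u hu => ?_)
    (Eventually.of_forall fun u hu => hs.mul_left _)
    ?_ (Eventually.of_forall fun u hu => (Real.hasSum_cos _).mul_left _)
  · have e : (fun k : ℕ => (-1) ^ k * z ^ (2 * k) / (2 * k).factorial * moment α k) =
        fun k : ℕ => ∫ u in (-1 : ℝ)..1,
          (1 - u ^ 2) ^ α * ((-1) ^ k * (z * u) ^ (2 * k) / (2 * k).factorial) := by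
      funext k
      rw [moment, ← intervalIntegral.integral_const_mul]
      congr 1; ext u; ring
    rw [e]; exact h
  · rw [uIoc_of_le (by norm_num)] at hu
    have : |u| ≤ 1 := abs_le.2 ⟨hu.1.le, hu.2⟩
    simp only [norm_mul, norm_div, norm_pow, Real.norm_eq_abs, abs_neg, abs_one, one_pow, one_mul,
      Nat.abs_cast, mul_pow]
    gcongr
    exact mul_le_of_le_one_right (by positivity) (pow_le_one₀ (abs_nonneg _) this)
  · simp only [tsum_mul_left]
    exact (by fun_prop : Continuous _).intervalIntegrable _ _

/-- The coefficients of the power series of `J_ν`, `ν = α + 1/2`, are those of `bj α` up to the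
factor `(Γ(ν + 1) · moment α 0)⁻¹`: by `moment_succ`, both satisfy the same recursion. -/
lemma coeff_eq {α : ℝ} (hα : 0 ≤ α) (k : ℕ) :
    (-1 : ℝ) ^ k / (k.factorial * Real.Gamma ((k : ℝ) + (α + 1 / 2) + 1)) * (1 / 2) ^ (2 * k) =
    (Real.Gamma (α + 1 / 2 + 1) * moment α 0)⁻¹ * ((-1) ^ k / (2 * k).factorial * moment α k) := by
  have hm := (moment_zero_pos hα).ne'
  induction k with
  | zero =>
    have := (Real.Gamma_pos_of_pos (by linarith : 0 < α + 1 / 2 + 1)).ne'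
    simp; field_simp
  | succ k ih =>
    have hp : (0 : ℝ) < (k : ℝ) + (α + 1 / 2) + 1 := by positivity
    have hG := Real.Gamma_add_one hp.ne'
    have hm1 : moment α (k + 1) = (2 * k + 1) * moment α k / (2 * (k + (α + 1 / 2) + 1)) := by
      rw [← moment_succ hα, mul_div_cancel_left₀]; positivity
    have e : (((k + 1 : ℕ) : ℝ) + (α + 1 / 2) + 1) = (k : ℝ) + (α + 1 / 2) + 1 + 1 := by
      push_cast; ring
    have e2 : ((2 * (k + 1)).factorial : ℝ) = (2 * k + 2) * (2 * k + 1) * (2 * k).factorial := by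
      rw [show 2 * (k + 1) = 2 * k + 1 + 1 by ring, Nat.factorial_succ, Nat.factorial_succ]
      push_cast; ring
    have hGp := Real.Gamma_pos_of_pos hp
    rw [e, hG, hm1, e2, Nat.factorial_succ]
    push_cast
    have : (-1 : ℝ) ^ (k + 1) / ((k + 1) * k.factorial * ((k + (α + 1 / 2) + 1) *
        Real.Gamma ((k : ℝ) + (α + 1 / 2) + 1))) * (1 / 2) ^ (2 * (k + 1)) =
        (-1 : ℝ) ^ k / (k.factorial * Real.Gamma ((k : ℝ) + (α + 1 / 2) + 1)) * (1 / 2) ^ (2 * k)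
          * (-1 / (4 * (k + 1) * (k + (α + 1 / 2) + 1))) := by
      field_simp; ring
    rw [this, ih]
    have h1 : (2 * (k : ℝ) + 1) ≠ 0 := by positivity
    have h2 := (Real.Gamma_pos_of_pos (by linarith : 0 < α + 1 / 2 + 1)).ne'
    field_simp; ring

/-- Poisson representation of the Bessel function: `𝒥_ν(z) = c z^{2ν} bj α z` with
`ν = α + 1/2`. -/
lemma calJ_eq {α : ℝ} (hα : 0 ≤ α) :
    ∃ c : ℝ, ∀ z : ℝ, 0 < z → calJ (α + 1 / 2) z = c * z ^ (2 * α + 1) * bj α z := by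
  refine ⟨(1 / 2) ^ (α + 1 / 2) * (Real.Gamma (α + 1 / 2 + 1) * moment α 0)⁻¹, fun z hz => ?_⟩
  have key : besselJ (α + 1 / 2) z = (z / 2) ^ (α + 1 / 2) *
      (Real.Gamma (α + 1 / 2 + 1) * moment α 0)⁻¹ * bj α z := by
    rw [besselJ, ← (hasSum_bj hα z).tsum_eq, ← tsum_mul_left]
    congr 1; ext k
    have h1 : (z / 2) ^ ((2 * k : ℝ) + (α + 1 / 2)) =
        z ^ (2 * k) * (1 / 2) ^ (2 * k) * (z / 2) ^ (α + 1 / 2) := by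
      rw [Real.rpow_add (by positivity), ← mul_pow, ← Real.rpow_natCast]
      push_cast; rw [mul_one_div]
    rw [h1]
    have h2 := coeff_eq hα k
    calc _ = ((-1 : ℝ) ^ k / (k.factorial * Real.Gamma ((k : ℝ) + (α + 1 / 2) + 1)) *
          (1 / 2) ^ (2 * k)) * z ^ (2 * k) * (z / 2) ^ (α + 1 / 2) := by ring
      _ = _ := by rw [h2]; ring
  have h3 : (z / 2) ^ (α + 1 / 2) = z ^ (α + 1 / 2) * (1 / 2) ^ (α + 1 / 2) := by
    rw [← Real.mul_rpow hz.le (by norm_num), mul_one_div]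
  have h4 : z ^ (2 * α + 1) = z ^ (α + 1 / 2) * z ^ (α + 1 / 2) := by
    rw [← Real.rpow_add hz]; congr 1; ring
  rw [calJ, key, h3, h4]; ring

/-! ### Oscillatory integrals with quadratic phase -/

/-- The oscillating factor `e^{i(Tx² + yx)}`. -/
def ph (T y x : ℝ) : ℂ := Complex.exp (Complex.I * ((T * x ^ 2 + y * x : ℝ) : ℂ))

lemma norm_ph (T y x : ℝ) : ‖ph T y x‖ = 1 := by
  rw [ph, mul_comm, Complex.norm_exp_ofReal_mul_I]

lemma continuous_ph (T y : ℝ) : Continuous (ph T y) := by unfold ph; fun_prop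

lemma hasDerivAt_ph {T : ℝ} (hT : T ≠ 0) (y x : ℝ) :
    HasDerivAt (ph T y) (Complex.I * T * (2 * x + (y / T : ℝ)) * ph T y x) x := by
  have h1 : HasDerivAt (fun x : ℝ => T * x ^ 2 + y * x) (T * (2 * x) + y) x := by
    exact (((hasDerivAt_pow 2 x).const_mul T).fun_add
      ((hasDerivAt_id' x).const_mul y)).congr_deriv (by simp)
  have h2 := (h1.ofReal_comp.const_mul Complex.I).cexp
  have : (T : ℂ) ≠ 0 := by exact_mod_cast hT
  exact h2.congr_deriv (by unfold ph; push_cast; field_simp)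

/-- Partial Fresnel integrals over `[0, b]`: trivial bound on `[0, 1]`, and integration by parts
against `1/x` on `[1, b]`. -/
lemma fresnel_nonneg {b : ℝ} (hb : 0 ≤ b) : ‖∫ x in (0 : ℝ)..b, ph 1 0 x‖ ≤ 5 / 2 := by
  have hc := continuous_ph 1 0
  have triv : ∀ c : ℝ, 0 ≤ c → c ≤ 1 → ‖∫ x in (0 : ℝ)..c, ph 1 0 x‖ ≤ 1 := fun c h0 h1 => by
    have := intervalIntegral.norm_integral_le_of_norm_le_const (a := 0) (b := c) (C := 1)
      (f := ph 1 0) fun x _ => (norm_ph 1 0 x).le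
    rw [sub_zero, abs_of_nonneg h0, one_mul] at this
    exact this.trans h1
  rcases le_total b 1 with h1 | h1
  · exact (triv b hb h1).trans (by norm_num)
  have hpos : ∀ x ∈ uIcc 1 b, 0 < x := fun x hx => by
    rw [uIcc_of_le h1] at hx; linarith [hx.1]
  have hI : IntervalIntegrable (fun x : ℝ => (x ^ 2)⁻¹) volume 1 b := by
    refine ContinuousOn.intervalIntegrable (ContinuousOn.inv₀ (by fun_prop) fun x hx => ?_)
    exact pow_ne_zero _ (hpos x hx).ne'
  have hder : ∀ x ∈ uIcc 1 b, HasDerivAt (fun x : ℝ => (x⁻¹ : ℝ)) (-(x ^ 2)⁻¹) x :=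
    fun x hx => hasDerivAt_inv (hpos x hx).ne'
  have hint : ∫ x in (1 : ℝ)..b, (x ^ 2)⁻¹ = 1 - b⁻¹ := by
    rw [intervalIntegral.integral_eq_sub_of_hasDerivAt (f := fun x => -x⁻¹)
      (fun x hx => by simpa using (hder x hx).fun_neg) hI]
    simp; ring
  have parts := intervalIntegral.integral_mul_deriv_eq_deriv_mul (a := 1) (b := b)
    (u := fun x : ℝ => ((x⁻¹ : ℝ) : ℂ)) (v := ph 1 0)
    (u' := fun x : ℝ => ((-(x ^ 2)⁻¹ : ℝ) : ℂ))
    (v' := fun x => Complex.I * (1 : ℝ) * (2 * x + (0 / 1 : ℝ)) * ph 1 0 x)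
    (fun x hx => (hder x hx).ofReal_comp)
    (fun x hx => hasDerivAt_ph one_ne_zero 0 x)
    (ContinuousOn.intervalIntegrable (Complex.continuous_ofReal.comp_continuousOn
      (ContinuousOn.inv₀ (by fun_prop) fun x hx => pow_ne_zero _ (hpos x hx).ne').neg))
    ((by fun_prop : Continuous _).intervalIntegrable _ _)
  have e : ∫ x in (1 : ℝ)..b, ((x⁻¹ : ℝ) : ℂ) *
      (Complex.I * (1 : ℝ) * (2 * x + (0 / 1 : ℝ)) * ph 1 0 x) =
      2 * Complex.I * ∫ x in (1 : ℝ)..b, ph 1 0 x := by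
    rw [← intervalIntegral.integral_const_mul]
    refine intervalIntegral.integral_congr fun x hx => ?_
    have : (x : ℂ) ≠ 0 := by exact_mod_cast (hpos x hx).ne'
    simp; field_simp
  have hrem : ‖∫ x in (1 : ℝ)..b, ((-(x ^ 2)⁻¹ : ℝ) : ℂ) * ph 1 0 x‖ ≤ 1 := by
    refine (intervalIntegral.norm_integral_le_of_norm_le h1 (Eventually.of_forall fun x _ => ?_)
      hI).trans ?_
    · rw [norm_mul, norm_ph, Complex.norm_real, norm_neg, mul_one, norm_inv, norm_pow,
        Real.norm_eq_abs, sq_abs]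
    · rw [hint]; have : 0 < b⁻¹ := by positivity
      linarith
  rw [e] at parts
  have hb1 : ‖∫ x in (1 : ℝ)..b, ph 1 0 x‖ ≤ 3 / 2 := by
    have h2 : ‖2 * Complex.I * ∫ x in (1 : ℝ)..b, ph 1 0 x‖ ≤ 3 := by
      rw [parts]
      refine (norm_sub_le _ _).trans ?_
      have := norm_sub_le (((b⁻¹ : ℝ) : ℂ) * ph 1 0 b) (((1⁻¹ : ℝ) : ℂ) * ph 1 0 1)
      simp only [norm_mul, norm_ph, Complex.norm_real, Real.norm_eq_abs, mul_one] at this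
      have hbi : |b⁻¹| ≤ 1 := by
        rw [abs_of_nonneg (by positivity)]; exact inv_le_one_of_one_le₀ h1
      rw [inv_one, abs_one] at this
      linarith
    rw [norm_mul, norm_mul, Complex.norm_I] at h2
    norm_num at h2
    linarith
  rw [← intervalIntegral.integral_add_adjacent_intervals (hc.intervalIntegrable 0 1)
    (hc.intervalIntegrable 1 b)]
  refine (norm_add_le _ _).trans ?_
  linarith [triv 1 zero_le_one le_rfl]

lemma fresnel (a b : ℝ) : ‖∫ x in a..b, ph 1 0 x‖ ≤ 5 := by
  have hc := continuous_ph 1 0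
  have h0 : ∀ b : ℝ, ‖∫ x in (0 : ℝ)..b, ph 1 0 x‖ ≤ 5 / 2 := fun b => by
    rcases le_total 0 b with h | h
    · exact fresnel_nonneg h
    · have e : ∫ x in (0 : ℝ)..(-b), ph 1 0 x = ∫ x in b..0, ph 1 0 x := by
        have := intervalIntegral.integral_comp_neg (a := b) (b := 0) (ph 1 0)
        rw [neg_zero] at this
        rw [← this]; congr 1; ext x; simp [ph]
      rw [intervalIntegral.integral_symm, norm_neg, ← e]
      exact fresnel_nonneg (by linarith)
  rw [← intervalIntegral.integral_add_adjacent_intervals (hc.intervalIntegrable a 0)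
    (hc.intervalIntegrable 0 b), intervalIntegral.integral_symm]
  refine (norm_add_le _ _).trans ?_
  rw [norm_neg]
  linarith [h0 a, h0 b]

lemma ph_neg (T y x : ℝ) : ph (-T) (-y) x = (starRingEnd ℂ) (ph T y x) := by
  rw [ph, ph, ← Complex.exp_conj, map_mul, Complex.conj_I, Complex.conj_ofReal]
  congr 1; push_cast; ring

/-- For `T > 0`, completing the square reduces to the Fresnel integral. -/
lemma vdc_pos {T : ℝ} (hT : 0 < T) (y a b : ℝ) :
    ‖∫ x in a..b, ph T y x‖ ≤ 5 * T ^ (-(1 / 2) : ℝ) := by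
  have hs : 0 < √T := Real.sqrt_pos.2 hT
  have e : ∀ x, ph T y x = Complex.exp (Complex.I * ((-(y ^ 2 / (4 * T)) : ℝ) : ℂ)) *
      ph 1 0 (√T * x + y / (2 * √T)) := fun x => by
    simp only [ph]
    rw [← Complex.exp_add, ← mul_add, ← Complex.ofReal_add]
    congr 3
    have h2 : √T ^ 2 = T := Real.sq_sqrt hT.le
    have : (√T * x + y / (2 * √T)) ^ 2 = T * x ^ 2 + y * x + y ^ 2 / (4 * T) := by
      rw [add_sq, mul_pow, div_pow, mul_pow, h2]; field_simp; ring
    rw [this]; ring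
  simp only [e]
  rw [intervalIntegral.integral_const_mul,
    intervalIntegral.integral_comp_mul_add _ hs.ne', norm_mul, norm_smul,
    mul_comm Complex.I, Complex.norm_exp_ofReal_mul_I, one_mul, Real.rpow_neg hT.le,
    ← Real.sqrt_eq_rpow, mul_comm, norm_inv, Real.norm_of_nonneg hs.le]
  gcongr
  exact fresnel _ _

/-- Van der Corput bound for quadratic phases, uniform in the linear term and in the interval. -/
lemma vdc {T : ℝ} (hT : T ≠ 0) (y a b : ℝ) :
    ‖∫ x in a..b, ph T y x‖ ≤ 5 * |T| ^ (-(1 / 2) : ℝ) := by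
  rcases lt_or_gt_of_ne hT with h | h
  · have := vdc_pos (neg_pos.2 h) (-y) a b
    simp only [ph_neg] at this
    rw [intervalIntegral.intervalIntegral_eq_integral_uIoc, integral_conj,
      norm_smul, RCLike.norm_conj, ← norm_smul,
      ← intervalIntegral.intervalIntegral_eq_integral_uIoc] at this
    rwa [abs_of_neg h]
  · rw [abs_of_pos h]; exact vdc_pos h y a b

/-- Van der Corput bound with an amplitude `g` vanishing at the right end point, by integration by
parts against the primitive of the phase factor. -/
lemma vdc_amp {T : ℝ} (hT : T ≠ 0) (y : ℝ) {m M D : ℝ} (hmM : m ≤ M) {g g' : ℝ → ℂ}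
    (hg : ∀ x ∈ Icc m M, HasDerivAt g (g' x) x) (hg' : ContinuousOn g' (Icc m M))
    (hgM : g M = 0) (hD : ∀ x ∈ Icc m M, ‖g' x‖ ≤ D) :
    ‖∫ x in m..M, ph T y x * g x‖ ≤ 5 * |T| ^ (-(1 / 2) : ℝ) * D * (M - m) := by
  have hc := continuous_ph T y
  have key := intervalIntegral.integral_mul_deriv_eq_deriv_mul (a := m) (b := M)
    (u := g) (u' := g') (v := fun x => ∫ s in m..x, ph T y s) (v' := ph T y)
    (fun x hx => hg x (by rwa [uIcc_of_le hmM] at hx))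
    (fun x _ => intervalIntegral.integral_hasDerivAt_right (hc.intervalIntegrable _ _)
      hc.stronglyMeasurable.stronglyMeasurableAtFilter hc.continuousAt)
    (by rw [← uIcc_of_le hmM] at hg'; exact hg'.intervalIntegrable)
    (hc.intervalIntegrable _ _)
  simp only [hgM, zero_mul, intervalIntegral.integral_same, mul_zero, sub_zero, zero_sub] at key
  have e : ∫ x in m..M, ph T y x * g x = ∫ x in m..M, g x * ph T y x := by
    congr 1; ext x; ring
  rw [e, key, norm_neg]
  have := intervalIntegral.norm_integral_le_of_norm_le_const (a := m) (b := M)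
    (C := 5 * |T| ^ (-(1 / 2) : ℝ) * D) (f := fun x => g' x * ∫ s in m..x, ph T y s)
    (fun x hx => by
      rw [uIoc_of_le hmM] at hx
      rw [norm_mul, mul_comm]
      have hx' : x ∈ Icc m M := ⟨hx.1.le, hx.2⟩
      gcongr
      · exact vdc hT y m x
      · exact hD x hx')
  rwa [abs_of_nonneg (sub_nonneg.2 hmM)] at this

/-- Non-stationary phase: the derivative `T (2x + b)` of the phase `T (x² + bx)` has size at least
`m |T|` on `[m, M]` when `|b| ≤ m`, so each integration by parts gains a factor `|T|⁻¹`. The power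
`k` of `(2x + b)⁻¹` is carried along to make the induction on `N` close. -/
lemma nonstat {m M : ℝ} (hm : 0 < m) (hmM : m ≤ M) (N : ℕ) :
    ∀ (f : ℝ → ℂ), ContDiff ℝ (⊤ : ℕ∞) f → f =ᶠ[𝓝 m] 0 → f =ᶠ[𝓝 M] 0 → ∀ k : ℕ,
    ∃ C : ℝ, ∀ T b : ℝ, T ≠ 0 → |b| ≤ m →
      ‖∫ x in m..M, ph T (T * b) x * (f x * ((2 * x + b : ℝ) : ℂ)⁻¹ ^ k)‖ ≤ C * (|T| ^ N)⁻¹ := by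
  have hlow : ∀ {x b : ℝ}, x ∈ Icc m M → |b| ≤ m → m ≤ 2 * x + b := fun hx hb => by
    linarith [hx.1, (abs_le.1 hb).1]
  induction N with
  | zero =>
    intro f hf _ _ k
    obtain ⟨C, hC⟩ := (isCompact_Icc (a := m) (b := M)).exists_bound_of_continuousOn
      hf.continuous.continuousOn
    refine ⟨C * m⁻¹ ^ k * |M - m|, fun T b hT hb => ?_⟩
    rw [pow_zero, inv_one, mul_one]
    refine intervalIntegral.norm_integral_le_of_norm_le_const fun x hx => ?_
    rw [uIoc_of_le hmM] at hx
    have hx' : x ∈ Icc m M := ⟨hx.1.le, hx.2⟩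
    have h2 := hlow hx' hb
    rw [norm_mul, norm_ph, one_mul, norm_mul, norm_pow, norm_inv, Complex.norm_real,
      Real.norm_of_nonneg (by linarith)]
    have := hC x hx'
    have h0 : 0 ≤ C := (norm_nonneg _).trans this
    have h3 : 0 < 2 * x + b := by linarith
    gcongr
  | succ N ih =>
    intro f hf hfm hfM k
    have hd : ContDiff ℝ (⊤ : ℕ∞) (deriv f) := ((contDiff_infty_iff_deriv (𝕜 := ℝ)).1 hf).2
    have hdm : deriv f =ᶠ[𝓝 m] 0 := by
      have := hfm.deriv
      simpa using this
    have hdM : deriv f =ᶠ[𝓝 M] 0 := by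
      have := hfM.deriv
      simpa using this
    obtain ⟨C1, h1⟩ := ih (deriv f) hd hdm hdM (k + 1)
    obtain ⟨C2, h2⟩ := ih f hf hfm hfM (k + 2)
    refine ⟨C1 + 2 * (k + 1) * C2, fun T b hT hb => ?_⟩
    have hTc : (T : ℂ) ≠ 0 := by exact_mod_cast hT
    have hne : ∀ x ∈ uIcc m M, ((2 * x + b : ℝ) : ℂ) ≠ 0 := fun x hx => by
      rw [uIcc_of_le hmM] at hx
      have := hlow hx hb
      exact_mod_cast (by linarith : (0 : ℝ) < 2 * x + b).ne'
    have hcont : ∀ j : ℕ, ContinuousOn (fun x : ℝ => ((2 * x + b : ℝ) : ℂ)⁻¹ ^ j) (uIcc m M) :=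
      fun j => ContinuousOn.pow (ContinuousOn.inv₀ (by fun_prop) hne) j
    have hp := continuous_ph T (T * b)
    have hI : ∀ (g : ℝ → ℂ) (_ : Continuous g) (j : ℕ), ContinuousOn
        (fun x => g x * ((2 * x + b : ℝ) : ℂ)⁻¹ ^ j) (uIcc m M) :=
      fun g hg j => hg.continuousOn.mul (hcont j)
    have parts := intervalIntegral.integral_mul_deriv_eq_deriv_mul (a := m) (b := M)
      (u := fun x => f x * ((2 * x + b : ℝ) : ℂ)⁻¹ ^ (k + 1)) (v := ph T (T * b))
      (u' := fun x => deriv f x * ((2 * x + b : ℝ) : ℂ)⁻¹ ^ (k + 1) -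
        2 * (k + 1) * (f x * ((2 * x + b : ℝ) : ℂ)⁻¹ ^ (k + 2)))
      (v' := fun x => Complex.I * T * (2 * x + (T * b / T : ℝ)) * ph T (T * b) x)
      (fun x hx => by
        have hx0 := hne x hx
        have h1 : HasDerivAt (fun x : ℝ => ((2 * x + b : ℝ) : ℂ)) (2 : ℂ) x := by
          have : HasDerivAt (fun x : ℝ => 2 * x + b) 2 x := by
            simpa using ((hasDerivAt_id x).const_mul 2).add_const b
          simpa using this.ofReal_comp
        have h2 := (h1.fun_inv hx0).fun_pow (k + 1)
        have h3 := ((hf.differentiable (by simp)) x).hasDerivAt.mul h2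
        refine h3.congr_deriv ?_
        rw [Nat.add_sub_cancel, div_eq_mul_inv, ← inv_pow]
        push_cast
        ring)
      (fun x _ => hasDerivAt_ph hT (T * b) x)
      (((hI _ hd.continuous _).sub (continuousOn_const.mul (hI _ hf.continuous _))).intervalIntegrable)
      ((by fun_prop : Continuous _).intervalIntegrable _ _)
    have e : ∫ x in m..M, f x * ((2 * x + b : ℝ) : ℂ)⁻¹ ^ (k + 1) *
        (Complex.I * T * (2 * x + (T * b / T : ℝ)) * ph T (T * b) x) =
        Complex.I * T * ∫ x in m..M, ph T (T * b) x * (f x * ((2 * x + b : ℝ) : ℂ)⁻¹ ^ k) := by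
      rw [← intervalIntegral.integral_const_mul]
      refine intervalIntegral.integral_congr fun x hx => ?_
      have hx0 := hne x hx
      simp only [mul_div_cancel_left₀ _ hT]
      push_cast at hx0 ⊢
      rw [pow_succ]
      generalize (2 * (x : ℂ) + b)⁻¹ ^ k = r
      field_simp
    have e2 : ∫ x in m..M, (deriv f x * ((2 * x + b : ℝ) : ℂ)⁻¹ ^ (k + 1) -
        2 * (k + 1) * (f x * ((2 * x + b : ℝ) : ℂ)⁻¹ ^ (k + 2))) * ph T (T * b) x =
        (∫ x in m..M, ph T (T * b) x * (deriv f x * ((2 * x + b : ℝ) : ℂ)⁻¹ ^ (k + 1))) -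
        2 * (k + 1) * ∫ x in m..M, ph T (T * b) x * (f x * ((2 * x + b : ℝ) : ℂ)⁻¹ ^ (k + 2)) := by
      rw [← intervalIntegral.integral_const_mul, ← intervalIntegral.integral_sub]
      · congr 1; ext x; ring
      · exact (hp.continuousOn.mul (hI _ hd.continuous _)).intervalIntegrable
      · exact (continuousOn_const.mul
          (hp.continuousOn.mul (hI _ hf.continuous _))).intervalIntegrable
    rw [e, e2, hfm.eq_of_nhds, hfM.eq_of_nhds] at parts
    simp only [Pi.zero_apply, zero_mul, sub_self, zero_sub] at parts
    have hn := congrArg norm parts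
    rw [norm_neg, norm_mul, norm_mul, Complex.norm_I, one_mul, Complex.norm_real,
      Real.norm_eq_abs] at hn
    have hk : ‖(2 * (k + 1) : ℂ)‖ = 2 * (k + 1) := by
      have : (2 * (k + 1) : ℂ) = ((2 * (k + 1) : ℝ) : ℂ) := by push_cast; ring
      rw [this, Complex.norm_real, Real.norm_of_nonneg (by positivity)]
    have hb2 := norm_sub_le
      (∫ x in m..M, ph T (T * b) x * (deriv f x * ((2 * x + b : ℝ) : ℂ)⁻¹ ^ (k + 1)))
      (2 * (k + 1) * ∫ x in m..M, ph T (T * b) x * (f x * ((2 * x + b : ℝ) : ℂ)⁻¹ ^ (k + 2)))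
    rw [← hn, norm_mul, hk] at hb2
    have hTp : 0 < |T| := abs_pos.2 hT
    have h1' := h1 T b hT hb
    have h2' := h2 T b hT hb
    have h3 : |T| * ‖∫ x in m..M, ph T (T * b) x * (f x * ((2 * x + b : ℝ) : ℂ)⁻¹ ^ k)‖ ≤
        (C1 + 2 * (k + 1) * C2) * (|T| ^ N)⁻¹ := by
      calc _ ≤ _ := hb2
        _ ≤ C1 * (|T| ^ N)⁻¹ + 2 * (k + 1) * (C2 * (|T| ^ N)⁻¹) := by gcongr
        _ = _ := by ring
    rw [pow_succ, mul_inv, ← mul_assoc, ← div_eq_mul_inv, le_div_iff₀ hTp, mul_comm]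
    exact h3

/-! ### Large-argument behaviour of the Bessel function -/

/-- Solutions of `W″ = (q / z² - 1) W` are bounded on `[1, ∞)` together with their derivative: the
energy `W² + W′²`, corrected by the factor `e^{q/z}`, is nonincreasing. -/
lemma energy_bound {q : ℝ} (hq : 0 ≤ q) {W W1 : ℝ → ℝ}
    (hW : ∀ z, 0 < z → HasDerivAt W (W1 z) z)
    (hW1 : ∀ z, 0 < z → HasDerivAt W1 ((q / z ^ 2 - 1) * W z) z) :
    ∃ C : ℝ, 0 ≤ C ∧ ∀ z, 1 ≤ z → |W z| ≤ C ∧ |W1 z| ≤ C := by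
  set F : ℝ → ℝ := fun z => (W z ^ 2 + W1 z ^ 2) * exp (q / z) with hF
  have hd : ∀ z, 0 < z → HasDerivAt F (-(q / z ^ 2) * (W z - W1 z) ^ 2 * exp (q / z)) z := by
    intro z hz
    -- `2WW′ + 2W′W″ = 2(q/z²)WW′`, which with `-(q/z²)(W² + W′²)` forms `-(q/z²)(W - W′)²`.
    have h1 := ((hW z hz).fun_pow 2).fun_add ((hW1 z hz).fun_pow 2)
    have h2 := (((hasDerivAt_inv hz.ne').const_mul q).exp)
    refine ((h1.fun_mul h2).congr_deriv ?_)
    simp only [div_eq_mul_inv]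
    norm_num
    ring
  have hanti : AntitoneOn F (Ici 1) := by
    refine antitoneOn_of_deriv_nonpos (convex_Ici 1) ?_ ?_ ?_
    · exact fun z hz => (hd z (lt_of_lt_of_le one_pos hz)).continuousAt.continuousWithinAt
    · intro z hz
      rw [interior_Ici] at hz
      exact (hd z (one_pos.trans hz)).differentiableAt.differentiableWithinAt
    · intro z hz
      rw [interior_Ici] at hz
      rw [(hd z (one_pos.trans hz)).deriv]
      have : 0 ≤ q / z ^ 2 * (W z - W1 z) ^ 2 * exp (q / z) := by positivity
      linarith
  have hE : ∀ z, 1 ≤ z → W z ^ 2 + W1 z ^ 2 ≤ F 1 := fun z hz => by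
    refine le_trans ?_ (hanti (mem_Ici.2 le_rfl) (mem_Ici.2 hz) hz)
    have : 1 ≤ exp (q / z) := Real.one_le_exp (by positivity)
    exact le_mul_of_one_le_right (by positivity) this
  refine ⟨√(F 1), Real.sqrt_nonneg _, fun z hz => ⟨?_, ?_⟩⟩
  · exact Real.abs_le_sqrt (by nlinarith [hE z hz, sq_nonneg (W1 z)])
  · exact Real.abs_le_sqrt (by nlinarith [hE z hz, sq_nonneg (W z)])

/-- `W(z) = z^{α+1} bj α z`, which is `z^{1/2} J_ν(z)` up to a constant. It satisfies
`W″ = (α (α + 1) / z² - 1) W`. -/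
def bW (α z : ℝ) : ℝ := z ^ (α + 1) * bj α z

/-- The derivative of `bW α` on `(0, ∞)`. -/
def bW1 (α z : ℝ) : ℝ := z ^ (α + 1) * bj1 α z + (α + 1) * z ^ α * bj α z

lemma hasDerivAt_bW {α : ℝ} (hα : 0 ≤ α) {z : ℝ} (hz : 0 < z) :
    HasDerivAt (bW α) (bW1 α z) z := by
  have h1 := Real.hasDerivAt_rpow_const (x := z) (p := α + 1) (Or.inl hz.ne')
  refine (h1.fun_mul (hasDerivAt_bj hα z)).congr_deriv ?_
  rw [bW1, add_sub_cancel_right]; ring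

lemma hasDerivAt_bW1 {α : ℝ} (hα : 0 ≤ α) {z : ℝ} (hz : 0 < z) :
    HasDerivAt (bW1 α) (((α + 1) * α / z ^ 2 - 1) * bW α z) z := by
  have h1 := Real.hasDerivAt_rpow_const (x := z) (p := α + 1) (Or.inl hz.ne')
  have h2 := (Real.hasDerivAt_rpow_const (x := z) (p := α) (Or.inl hz.ne')).const_mul (α + 1)
  refine ((h1.fun_mul (hasDerivAt_bj1 hα z)).fun_add
    (h2.fun_mul (hasDerivAt_bj hα z))).congr_deriv ?_
  have ode := bj_ode hα z
  rw [bW, add_sub_cancel_right]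
  have e1 : z ^ (α + 1) = z ^ (α - 1) * z ^ 2 := by
    rw [← Real.rpow_natCast, ← Real.rpow_add hz]; congr 1; push_cast; ring
  have e2 : z ^ α = z ^ (α - 1) * z := by
    rw [← Real.rpow_add_one hz.ne']; congr 1; ring
  rw [e1, e2]
  field_simp
  linear_combination z * ode

/-- The amplitude `A_ε(z) = ½ (W(z) - iε W′(z)) e^{-iεz}`, `ε = ±1`, of the component of `W = bW α`
that oscillates like `e^{iεz}`; see `bW_eq`. -/
def bA (α ε z : ℝ) : ℂ :=
  (bW α z - Complex.I * ε * bW1 α z) / 2 * Complex.exp (Complex.I * ((-(ε * z) : ℝ) : ℂ))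

lemma bW_eq (α z : ℝ) : (bW α z : ℂ) =
    Complex.exp (Complex.I * ((1 * z : ℝ) : ℂ)) * bA α 1 z +
      Complex.exp (Complex.I * ((-1 * z : ℝ) : ℂ)) * bA α (-1) z := by
  have h : ∀ r : ℝ, Complex.exp (Complex.I * (r : ℂ)) *
      Complex.exp (Complex.I * ((-r : ℝ) : ℂ)) = 1 :=
    fun r => by rw [← Complex.exp_add]; simp
  have h1 := h (1 * z)
  have h2 := h (-1 * z)
  rw [bA, bA]
  push_cast at *
  linear_combination (-(bW α z - Complex.I * bW1 α z) / 2) * h1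
    - ((bW α z + Complex.I * bW1 α z) / 2) * h2

/-- In the derivative of `bA` the terms without decay cancel, and `A_ε′ = O(W / z²)` is left. -/
lemma hasDerivAt_bA {α ε : ℝ} (hα : 0 ≤ α) (hε : ε ^ 2 = 1) {z : ℝ} (hz : 0 < z) :
    HasDerivAt (bA α ε) (-(Complex.I * ε / 2) * (((α + 1) * α / z ^ 2 * bW α z : ℝ) : ℂ) *
      Complex.exp (Complex.I * ((-(ε * z) : ℝ) : ℂ))) z := by
  have h1 := (hasDerivAt_bW hα hz).ofReal_comp
  have h2 := ((hasDerivAt_bW1 hα hz).ofReal_comp).const_mul (Complex.I * ε)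
  have h3 : HasDerivAt (fun z => -(ε * z)) (-ε) z :=
    ((hasDerivAt_id' z).const_mul ε).fun_neg.congr_deriv (by ring)
  have h4 := (h3.ofReal_comp.const_mul Complex.I).cexp
  refine (((h1.fun_sub h2).div_const 2).fun_mul h4).congr_deriv ?_
  have hε' : (ε : ℂ) ^ 2 = 1 := by exact_mod_cast hε
  push_cast
  linear_combination (Complex.exp (Complex.I * -(ε * z)) * Complex.I ^ 2 * bW1 α z / 2) * hε' +
    (Complex.exp (Complex.I * -(ε * z)) * bW1 α z / 2) * Complex.I_sq

/-- The amplitudes are symbols of order zero, to first order: `A_ε = O(1)` and `A_ε′ = O(1/z)` on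
`[1, ∞)`. -/
lemma bA_bound {α : ℝ} (hα : 0 ≤ α) : ∃ C : ℝ, 0 ≤ C ∧ ∀ ε : ℝ, |ε| = 1 → ∀ z, 1 ≤ z →
    ‖bA α ε z‖ ≤ C ∧ ‖deriv (bA α ε) z‖ ≤ C / z := by
  obtain ⟨C, hC0, hC⟩ := energy_bound (q := (α + 1) * α) (by positivity)
    (fun z hz => hasDerivAt_bW hα hz) (fun z hz => hasDerivAt_bW1 hα hz)
  refine ⟨C + (α + 1) * α * C, by positivity, fun ε hε z hz => ?_⟩
  have hz0 : 0 < z := by linarith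
  obtain ⟨h1, h2⟩ := hC z hz
  have hexp : ‖Complex.exp (Complex.I * ((-(ε * z) : ℝ) : ℂ))‖ = 1 := by
    rw [mul_comm, Complex.norm_exp_ofReal_mul_I]
  constructor
  · rw [bA, norm_mul, hexp, mul_one, norm_div, Complex.norm_ofNat]
    have : ‖(bW α z : ℂ) - Complex.I * ε * bW1 α z‖ ≤ C + C := by
      refine (norm_sub_le _ _).trans ?_
      rw [norm_mul, norm_mul, Complex.norm_I, Complex.norm_real, Complex.norm_real,
        Complex.norm_real]
      simp only [Real.norm_eq_abs, hε, one_mul]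
      linarith
    have : 0 ≤ (α + 1) * α * C := by positivity
    linarith
  · rw [(hasDerivAt_bA hα (by rw [← sq_abs, hε, one_pow]) hz0).deriv, norm_mul, hexp, mul_one,
      norm_mul, norm_neg, norm_div, norm_mul, Complex.norm_I, Complex.norm_real, Complex.norm_real,
      Real.norm_eq_abs, hε, Complex.norm_ofNat, norm_mul, Real.norm_of_nonneg (by positivity),
      Real.norm_eq_abs]
    have h3 : (α + 1) * α / z ^ 2 ≤ (α + 1) * α / z := by
      gcongr; nlinarith
    calc (1 * 1 / 2 : ℝ) * ((α + 1) * α / z ^ 2 * |bW α z|)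
        ≤ 1 * ((α + 1) * α / z * C) := by gcongr; norm_num
      _ = (0 + (α + 1) * α * C) / z := by ring
      _ ≤ _ := by gcongr

/-! ### Estimates in the two regions -/

lemma exists_bound {f : ℝ → ℂ} {m M : ℝ} (hf : ContinuousOn f (Icc m M)) :
    ∃ C : ℝ, 0 ≤ C ∧ ∀ x ∈ Icc m M, ‖f x‖ ≤ C := by
  obtain ⟨C, hC⟩ := isCompact_Icc.exists_bound_of_continuousOn hf
  exact ⟨max C 0, le_max_right _ _, fun x hx => (hC x hx).trans (le_max_left _ _)⟩

/-- When `ρ` is bounded, `x ↦ bj α (ρ x)` is itself an admissible amplitude. -/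
lemma claimB_small {α : ℝ} (hα : 0 ≤ α) {m M : ℝ} (hm : 0 < m) (hmM : m ≤ M) {f : ℝ → ℂ}
    (hf : ContDiff ℝ (⊤ : ℕ∞) f) (hfM : f M = 0) :
    ∃ C : ℝ, 0 ≤ C ∧ ∀ T ρ : ℝ, T ≠ 0 → 0 < ρ → ρ * m ≤ 1 →
      ‖∫ x in m..M, ph T 0 x * (f x * (bj α (ρ * x) : ℂ))‖ ≤ C * |T| ^ (-(1 / 2) : ℝ) := by
  have hd : Continuous (deriv f) := hf.continuous_deriv (by simp)
  obtain ⟨C0, hC0, h0⟩ := exists_bound (hf.continuous.continuousOn (s := Icc m M))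
  obtain ⟨C1, hC1, h1⟩ := exists_bound (hd.continuousOn (s := Icc m M))
  obtain ⟨B, hB⟩ := abs_bj_le hα
  have hB0 : 0 ≤ B := (abs_nonneg _).trans (hB 0).1
  refine ⟨5 * (C1 * B + C0 * (m⁻¹ * B)) * (M - m),
    mul_nonneg (by positivity) (sub_nonneg.2 hmM), fun T ρ hT hρ hρm => ?_⟩
  have hρm' : ρ ≤ m⁻¹ := by rw [← one_div, le_div_iff₀ hm]; exact hρm
  have hcj : Continuous (bj α) :=
    continuous_iff_continuousAt.2 fun z => (hasDerivAt_bj hα z).continuousAt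
  have hcj1 : Continuous (bj1 α) :=
    continuous_iff_continuousAt.2 fun z => (hasDerivAt_bj1 hα z).continuousAt
  refine (vdc_amp hT 0 hmM (g := fun x => f x * (bj α (ρ * x) : ℂ))
    (g' := fun x => deriv f x * (bj α (ρ * x) : ℂ) + f x * ((ρ * bj1 α (ρ * x) : ℝ) : ℂ))
    (D := C1 * B + C0 * (m⁻¹ * B)) (fun x _ => ?_) ?_ ?_ (fun x hx => ?_)).trans (le_of_eq ?_)
  · have h2 : HasDerivAt (fun x => bj α (ρ * x)) (ρ * bj1 α (ρ * x)) x :=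
      ((hasDerivAt_bj hα (ρ * x)).comp x ((hasDerivAt_id' x).const_mul ρ)).congr_deriv (by ring)
    exact ((hf.differentiable (by simp)) x).hasDerivAt.fun_mul h2.ofReal_comp
  · have := hf.continuous
    exact (by fun_prop : Continuous _).continuousOn
  · simp [hfM]
  · refine (norm_add_le _ _).trans ?_
    rw [norm_mul, norm_mul, Complex.norm_real, Complex.norm_real, norm_mul,
      Real.norm_of_nonneg hρ.le, Real.norm_eq_abs, Real.norm_eq_abs]
    have := h0 x hx
    have := h1 x hx
    have := (hB (ρ * x)).1
    have := (hB (ρ * x)).2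
    gcongr
  · ring

/-- When `ρ` is bounded below, `bj α (ρ x)` is split as
`(ρ x)^{-(α+1)} (e^{iρx} A_+(ρx) + e^{-iρx} A_-(ρx))`, and `e^{±iρx}` is absorbed in the quadratic phase. -/
lemma claimB_large {α : ℝ} (hα : 0 ≤ α) {m M : ℝ} (hm : 0 < m) (hmM : m ≤ M) {f : ℝ → ℂ}
    (hf : ContDiff ℝ (⊤ : ℕ∞) f) (hfM : f M = 0) :
    ∃ C : ℝ, 0 ≤ C ∧ ∀ T ρ : ℝ, T ≠ 0 → 0 < ρ → 1 ≤ ρ * m →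
      ‖∫ x in m..M, ph T 0 x * (f x * (bj α (ρ * x) : ℂ))‖ ≤
        C * |T| ^ (-(1 / 2) : ℝ) * ρ ^ (-(α + 1)) := by
  have hd : Continuous (deriv f) := hf.continuous_deriv (by simp)
  have hpos : ∀ x ∈ Icc m M, 0 < x := fun x hx => hm.trans_le hx.1
  set χ : ℝ → ℂ := fun x => f x * ((x ^ (-(α + 1)) : ℝ) : ℂ) with hχ
  set χ' : ℝ → ℂ := fun x => deriv f x * ((x ^ (-(α + 1)) : ℝ) : ℂ) +
    f x * (((-(α + 1)) * x ^ (-(α + 1) - 1) : ℝ) : ℂ) with hχ'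
  have hχd : ∀ x ∈ Icc m M, HasDerivAt χ (χ' x) x := fun x hx =>
    ((hf.differentiable (by simp)) x).hasDerivAt.fun_mul
      (Real.hasDerivAt_rpow_const (Or.inl (hpos x hx).ne')).ofReal_comp
  have hrp : ∀ r : ℝ, ContinuousOn (fun x : ℝ => ((x ^ r : ℝ) : ℂ)) (Icc m M) := fun r =>
    Complex.continuous_ofReal.comp_continuousOn
      (continuousOn_id.rpow_const fun x hx => Or.inl (hpos x hx).ne')
  have hχc : ContinuousOn χ (Icc m M) := fun x hx => (hχd x hx).continuousAt.continuousWithinAt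
  have hχ'c : ContinuousOn χ' (Icc m M) := by
    refine (hd.continuousOn.mul (hrp _)).add (hf.continuous.continuousOn.mul ?_)
    simp only [Complex.ofReal_mul]
    exact continuousOn_const.mul (hrp _)
  obtain ⟨C0, hC0, h0⟩ := exists_bound hχc
  obtain ⟨C1, hC1, h1⟩ := exists_bound hχ'c
  obtain ⟨B, hB0, hB⟩ := bA_bound hα
  set D := C1 * B + C0 * (B / m)
  refine ⟨2 * (5 * D * (M - m)),
    mul_nonneg (by norm_num) (mul_nonneg (by positivity) (sub_nonneg.2 hmM)),
    fun T ρ hT hρ hρm => ?_⟩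
  have hz : ∀ x ∈ Icc m M, 1 ≤ ρ * x := fun x hx => hρm.trans (by gcongr; exact hx.1)
  have hAd : ∀ ε : ℝ, |ε| = 1 → ∀ x ∈ Icc m M, HasDerivAt (fun x => bA α ε (ρ * x))
      (deriv (bA α ε) (ρ * x) * ρ) x := fun ε hε x hx => by
    have h := (hasDerivAt_bA hα (by rw [← sq_abs, hε, one_pow] : ε ^ 2 = 1)
      (one_pos.trans_le (hz x hx)))
    have h' : HasDerivAt (bA α ε) (deriv (bA α ε) (ρ * x)) (ρ * x) := h.differentiableAt.hasDerivAt
    have h2 : HasDerivAt (fun x => ρ * x) ρ x := by simpa using (hasDerivAt_id' x).const_mul ρ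
    exact (h'.scomp x h2).congr_deriv (by simp [mul_comm])
  have hAc : ∀ ε : ℝ, |ε| = 1 → ContinuousOn (fun x => bA α ε (ρ * x)) (Icc m M) :=
    fun ε hε x hx => (hAd ε hε x hx).continuousAt.continuousWithinAt
  have hWc : ContinuousOn (fun x => bW α (ρ * x)) (Icc m M) := fun x hx =>
    ((hasDerivAt_bW hα (one_pos.trans_le (hz x hx))).continuousAt.comp
      (f := fun x => ρ * x) (by fun_prop)).continuousWithinAt
  have main : ∀ ε : ℝ, |ε| = 1 →
      ‖∫ x in m..M, ph T (ε * ρ) x * (χ x * bA α ε (ρ * x))‖ ≤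
        5 * |T| ^ (-(1 / 2) : ℝ) * D * (M - m) := by
    intro ε hε
    refine vdc_amp hT (ε * ρ) hmM (g := fun x => χ x * bA α ε (ρ * x))
      (g' := fun x => χ' x * bA α ε (ρ * x) + χ x * (deriv (bA α ε) (ρ * x) * ρ))
      (fun x hx => (hχd x hx).fun_mul (hAd ε hε x hx)) ?_ ?_ (fun x hx => ?_)
    · refine (hχ'c.mul (hAc ε hε)).add (hχc.mul (ContinuousOn.mul ?_ continuousOn_const))
      have : ContinuousOn (fun x => -(Complex.I * ε / 2) *
          (((α + 1) * α / (ρ * x) ^ 2 * bW α (ρ * x) : ℝ) : ℂ) *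
          Complex.exp (Complex.I * ((-(ε * (ρ * x)) : ℝ) : ℂ))) (Icc m M) := by
        refine (continuousOn_const.mul (Complex.continuous_ofReal.comp_continuousOn
          (ContinuousOn.mul (ContinuousOn.div continuousOn_const (by fun_prop) fun x hx => ?_)
            hWc))).mul (by fun_prop)
        exact pow_ne_zero _ (one_pos.trans_le (hz x hx)).ne'
      exact this.congr fun x hx => (hasDerivAt_bA hα (by rw [← sq_abs, hε, one_pow])
        (one_pos.trans_le (hz x hx))).deriv
    · simp [hχ, hfM]
    · refine (norm_add_le _ _).trans ?_
      rw [norm_mul, norm_mul (χ x), norm_mul (deriv _ _), Complex.norm_real,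
        Real.norm_of_nonneg hρ.le]
      obtain ⟨hb1, hb2⟩ := hB ε hε (ρ * x) (hz x hx)
      have hx0 := hpos x hx
      have hb3 : ‖deriv (bA α ε) (ρ * x)‖ * ρ ≤ B / m := by
        calc _ ≤ B / (ρ * x) * ρ := by gcongr
          _ = B / x := by field_simp
          _ ≤ B / m := by gcongr; exact hx.1
      exact add_le_add (mul_le_mul (h1 x hx) hb1 (norm_nonneg _) hC1)
        (mul_le_mul (h0 x hx) hb3 (by positivity) hC0)
  have hsplit : ∫ x in m..M, ph T 0 x * (f x * (bj α (ρ * x) : ℂ)) =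
      ((ρ ^ (-(α + 1)) : ℝ) : ℂ) * ((∫ x in m..M, ph T (1 * ρ) x * (χ x * bA α 1 (ρ * x))) +
        ∫ x in m..M, ph T (-1 * ρ) x * (χ x * bA α (-1) (ρ * x))) := by
    have hi : ∀ ε : ℝ, |ε| = 1 → IntervalIntegrable
        (fun x => ph T (ε * ρ) x * (χ x * bA α ε (ρ * x))) volume m M := fun ε hε => by
      refine ContinuousOn.intervalIntegrable ?_
      rw [uIcc_of_le hmM]
      exact (continuous_ph _ _).continuousOn.mul (hχc.mul (hAc ε hε))
    rw [← intervalIntegral.integral_add (hi 1 (by simp)) (hi (-1) (by simp)),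
      ← intervalIntegral.integral_const_mul]
    refine intervalIntegral.integral_congr fun x hx => ?_
    rw [uIcc_of_le hmM] at hx
    have hx0 := hpos x hx
    have e1 : bj α (ρ * x) = ρ ^ (-(α + 1)) * x ^ (-(α + 1)) * bW α (ρ * x) := by
      rw [bW, ← Real.mul_rpow hρ.le hx0.le, ← mul_assoc, ← Real.rpow_add (by positivity)]
      simp
    have e2 : ∀ ε : ℝ, ph T (ε * ρ) x =
        ph T 0 x * Complex.exp (Complex.I * ((ε * (ρ * x) : ℝ) : ℂ)) := fun ε => by
      rw [ph, ph, ← Complex.exp_add]; congr 1; push_cast; ring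
    simp only [e1, e2, hχ]
    rw [Complex.ofReal_mul, Complex.ofReal_mul, bW_eq]
    ring
  rw [hsplit, norm_mul, Complex.norm_real, Real.norm_of_nonneg (by positivity)]
  have h3 := (norm_add_le (∫ x in m..M, ph T (1 * ρ) x * (χ x * bA α 1 (ρ * x)))
    (∫ x in m..M, ph T (-1 * ρ) x * (χ x * bA α (-1) (ρ * x)))).trans
    (add_le_add (main 1 (by simp)) (main (-1) (by simp)))
  calc _ ≤ ρ ^ (-(α + 1)) * (5 * |T| ^ (-(1 / 2) : ℝ) * D * (M - m) +
        5 * |T| ^ (-(1 / 2) : ℝ) * D * (M - m)) := by gcongr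
    _ = _ := by ring

/-- The van der Corput bound `O(|T|^{-1/2} ρ^{-(α+1)})`, valid for all `T ≠ 0` and `ρ > 0`. -/
lemma claimB {α : ℝ} (hα : 0 ≤ α) {m M : ℝ} (hm : 0 < m) (hmM : m ≤ M) {f : ℝ → ℂ}
    (hf : ContDiff ℝ (⊤ : ℕ∞) f) (hfM : f M = 0) :
    ∃ C : ℝ, 0 ≤ C ∧ ∀ T ρ : ℝ, T ≠ 0 → 0 < ρ →
      ‖∫ x in m..M, ph T 0 x * (f x * (bj α (ρ * x) : ℂ))‖ ≤
        C * |T| ^ (-(1 / 2) : ℝ) * ρ ^ (-(α + 1)) := by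
  obtain ⟨C1, hC1, h1⟩ := claimB_small hα hm hmM hf hfM
  obtain ⟨C2, hC2, h2⟩ := claimB_large hα hm hmM hf hfM
  refine ⟨C1 * m ^ (-(α + 1)) + C2, by positivity, fun T ρ hT hρ => ?_⟩
  have hT0 : 0 < |T| := abs_pos.2 hT
  rcases le_total (ρ * m) 1 with h | h
  · refine (h1 T ρ hT hρ h).trans ?_
    have h3 : 1 ≤ ρ ^ (-(α + 1)) * m ^ (-(α + 1)) := by
      rw [← Real.mul_rpow hρ.le hm.le]
      exact Real.one_le_rpow_of_pos_of_le_one_of_nonpos (by positivity) h (by linarith)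
    calc C1 * |T| ^ (-(1 / 2) : ℝ) ≤ C1 * |T| ^ (-(1 / 2) : ℝ) *
          (ρ ^ (-(α + 1)) * m ^ (-(α + 1))) := le_mul_of_one_le_right (by positivity) h3
      _ = (C1 * m ^ (-(α + 1)) + 0) * |T| ^ (-(1 / 2) : ℝ) * ρ ^ (-(α + 1)) := by ring
      _ ≤ _ := by gcongr
  · refine (h2 T ρ hT hρ h).trans ?_
    have : 0 ≤ C1 * m ^ (-(α + 1)) := by positivity
    gcongr
    linarith

/-- The region `ρ ≤ m |T|`: inserting the Poisson integral, each inner integral has the phase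
`T x² ± ρ u x` with `|u| ≤ 1`, which has no stationary point on `[m, M]`. -/
lemma claimA {α : ℝ} (hα : 0 ≤ α) {m M : ℝ} (hm : 0 < m) (hmM : m ≤ M) {f : ℝ → ℂ}
    (hf : ContDiff ℝ (⊤ : ℕ∞) f) (hfm : f =ᶠ[𝓝 m] 0) (hfM : f =ᶠ[𝓝 M] 0) (N : ℕ) {r : ℝ}
    (hr0 : 0 ≤ r) (hrN : r ≤ N) :
    ∃ C : ℝ, 0 ≤ C ∧ ∀ T ρ : ℝ, T ≠ 0 → 0 < ρ → ρ ≤ m * |T| →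
      ‖∫ x in m..M, ph T 0 x * (f x * (bj α (ρ * x) : ℂ))‖ ≤ C * |T| ^ (-r) := by
  obtain ⟨C1, h1⟩ := nonstat hm hmM 0 f hf hfm hfM 0
  obtain ⟨C2, h2⟩ := nonstat hm hmM N f hf hfm hfM 0
  simp only [pow_zero, mul_one, inv_one] at h1 h2
  set C := max (max C1 C2) 0 with hC
  have hC0 : 0 ≤ C := le_max_right _ _
  -- For `|T| ≤ 1` the trivial bound (`N = 0`) is used, and `N ≥ r` integrations by parts otherwise.
  have hosc : ∀ T y : ℝ, T ≠ 0 → |y| ≤ m * |T| →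
      ‖∫ x in m..M, ph T y x * f x‖ ≤ C * |T| ^ (-r) := by
    intro T y hT hy
    have hT0 : 0 < |T| := abs_pos.2 hT
    have hb : |y / T| ≤ m := by rwa [abs_div, div_le_iff₀ hT0]
    have e : T * (y / T) = y := mul_div_cancel₀ _ hT
    rcases le_total |T| 1 with h | h
    · have := h1 T (y / T) hT hb
      rw [e] at this
      have h3 : 1 ≤ |T| ^ (-r) :=
        Real.one_le_rpow_of_pos_of_le_one_of_nonpos hT0 h (by linarith)
      exact (this.trans ((le_max_left _ _).trans (le_max_left _ _))).trans
        (le_mul_of_one_le_right hC0 h3)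
    · have := h2 T (y / T) hT hb
      rw [e] at this
      refine this.trans ?_
      have h3 : (|T| ^ N)⁻¹ ≤ |T| ^ (-r) := by
        rw [← Real.rpow_natCast, ← Real.rpow_neg hT0.le]
        exact Real.rpow_le_rpow_of_exponent_le h (by linarith)
      have h4 : C2 ≤ C := (le_max_right _ _).trans (le_max_left _ _)
      have : 0 ≤ (|T| ^ N)⁻¹ := by positivity
      exact mul_le_mul h4 h3 this hC0
  have hw := continuous_wt hα
  obtain ⟨B, hB⟩ := (isCompact_Icc (a := (-1 : ℝ)) (b := 1)).exists_bound_of_continuousOn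
    hw.continuousOn
  have hB0 : 0 ≤ B := (norm_nonneg _).trans (hB 0 (by simp))
  refine ⟨B * C * |1 - (-1)|, by positivity, fun T ρ hT hρ hρT => ?_⟩
  have hp := continuous_ph T 0
  have hfc := hf.continuous
  -- Fubini, together with `cos = (e^{i·} + e^{-i·}) / 2`.
  have hswap : ∫ x in m..M, ph T 0 x * (f x * (bj α (ρ * x) : ℂ)) =
      ∫ u in (-1 : ℝ)..1, (((1 - u ^ 2) ^ α : ℝ) : ℂ) *
        ((1 / 2) * ((∫ x in m..M, ph T (ρ * u) x * f x) +
          ∫ x in m..M, ph T (-(ρ * u)) x * f x)) := by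
    have e1 : ∀ x, ph T 0 x * (f x * (bj α (ρ * x) : ℂ)) = ∫ u in (-1 : ℝ)..1,
        ph T 0 x * f x * (((1 - u ^ 2) ^ α * cos (ρ * x * u) : ℝ) : ℂ) := fun x => by
      rw [intervalIntegral.integral_const_mul, intervalIntegral.integral_ofReal, bj, mul_assoc]
    simp only [e1]
    rw [intervalIntegral_intervalIntegral_swap]
    · congr 1; ext u
      rw [← intervalIntegral.integral_add, ← intervalIntegral.integral_const_mul,
        ← intervalIntegral.integral_const_mul]
      · congr 1; ext x
        have e2 : ∀ y : ℝ, ph T y x = ph T 0 x * Complex.exp (((y * x : ℝ) : ℂ) * Complex.I) :=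
          fun y => by rw [ph, ph, ← Complex.exp_add]; congr 1; push_cast; ring
        rw [e2 (ρ * u), e2 (-(ρ * u)), Complex.ofReal_mul, Complex.ofReal_cos, Complex.cos]
        push_cast
        rw [show (ρ : ℂ) * x * u = ρ * u * x by ring,
          show -((ρ : ℂ) * u * x) * Complex.I = -(ρ * u) * x * Complex.I by ring]
        ring
      · exact ((continuous_ph _ _).mul hfc).intervalIntegrable _ _
      · exact ((continuous_ph _ _).mul hfc).intervalIntegrable _ _
    · have hcont : Continuous (Function.uncurry fun x u : ℝ =>
          ph T 0 x * f x * (((1 - u ^ 2) ^ α * cos (ρ * x * u) : ℝ) : ℂ)) := by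
        have h3 : Continuous fun z : ℝ × ℝ => (1 - z.2 ^ 2) ^ α := hw.comp continuous_snd
        simp only [Function.uncurry_def]
        fun_prop
      refine (hcont.continuousOn.integrableOn_compact
        (isCompact_uIcc.prod isCompact_uIcc)).mono_set
        (prod_mono uIoc_subset_uIcc uIoc_subset_uIcc)
  rw [hswap]
  have hfin := intervalIntegral.norm_integral_le_of_norm_le_const (a := -1) (b := 1)
    (C := B * (C * |T| ^ (-r))) (f := fun u : ℝ => (((1 - u ^ 2) ^ α : ℝ) : ℂ) *
        ((1 / 2) * ((∫ x in m..M, ph T (ρ * u) x * f x) +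
          ∫ x in m..M, ph T (-(ρ * u)) x * f x)))
    (fun u hu => by
      rw [uIoc_of_le (by norm_num)] at hu
      have hu1 : |u| ≤ 1 := abs_le.2 ⟨hu.1.le, hu.2⟩
      have hy : |ρ * u| ≤ m * |T| := by
        rw [abs_mul, abs_of_pos hρ]
        exact (mul_le_of_le_one_right hρ.le hu1).trans hρT
      have a1 := hosc T (ρ * u) hT hy
      have a2 := hosc T (-(ρ * u)) hT (by rwa [abs_neg])
      rw [norm_mul, norm_mul, Complex.norm_real]
      have a3 := norm_add_le (∫ x in m..M, ph T (ρ * u) x * f x)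
        (∫ x in m..M, ph T (-(ρ * u)) x * f x)
      refine mul_le_mul (hB u ⟨hu.1.le, hu.2⟩) ?_ (by positivity) hB0
      norm_num
      linarith)
  refine hfin.trans (le_of_eq (by ring))

/-- The rescaled estimate. Where `ρ ≤ m |T|`, the bound `|T|^{-(α+3/2)}` of `claimA` is the required
one with `ρ^{s-(α+1)}` replaced by the smaller `|T|^{s-(α+1)}` (up to constants); where
`ρ ≥ m |T|`, the factor `(ρ/|T|)^s` is bounded below, and `claimB` suffices. -/
lemma claim {α : ℝ} (hα : 0 ≤ α) {m M : ℝ} (hm : 0 < m) (hmM : m ≤ M) {f : ℝ → ℂ}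
    (hf : ContDiff ℝ (⊤ : ℕ∞) f) (hfm : f =ᶠ[𝓝 m] 0) (hfM : f =ᶠ[𝓝 M] 0)
    {s : ℝ} (hs0 : 0 ≤ s) (hs1 : s ≤ α + 1) :
    ∃ C : ℝ, 0 ≤ C ∧ ∀ T ρ : ℝ, T ≠ 0 → 0 < ρ →
      ‖∫ x in m..M, ph T 0 x * (f x * (bj α (ρ * x) : ℂ))‖ ≤
        C * |T| ^ (-s - 1 / 2) * ρ ^ (s - (α + 1)) := by
  obtain ⟨C1, hC1, h1⟩ := claimA hα hm hmM hf hfm hfM ⌈α + 3 / 2⌉₊ (r := α + 3 / 2)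
    (by positivity) (Nat.le_ceil _)
  obtain ⟨C2, hC2, h2⟩ := claimB hα hm hmM hf hfM.eq_of_nhds
  refine ⟨C1 * (m⁻¹) ^ (s - (α + 1)) + C2 * m ^ (-s), by positivity, fun T ρ hT hρ => ?_⟩
  have hT0 : 0 < |T| := abs_pos.2 hT
  rcases le_total ρ (m * |T|) with h | h
  · refine (h1 T ρ hT hρ h).trans ?_
    have e : |T| ^ (-(α + 3 / 2)) = |T| ^ (-s - 1 / 2) * |T| ^ (s - (α + 1)) := by
      rw [← Real.rpow_add hT0]; congr 1; ring
    have h3 : |T| ^ (s - (α + 1)) ≤ (m⁻¹) ^ (s - (α + 1)) * ρ ^ (s - (α + 1)) := by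
      rw [← Real.mul_rpow (by positivity) hρ.le]
      refine Real.rpow_le_rpow_of_nonpos (by positivity) ?_ (by linarith)
      rw [inv_mul_le_iff₀ hm]; exact h
    calc C1 * |T| ^ (-(α + 3 / 2))
        ≤ C1 * (|T| ^ (-s - 1 / 2) * ((m⁻¹) ^ (s - (α + 1)) * ρ ^ (s - (α + 1)))) := by
          rw [e]; gcongr
      _ = (C1 * (m⁻¹) ^ (s - (α + 1)) + 0) * |T| ^ (-s - 1 / 2) * ρ ^ (s - (α + 1)) := by ring
      _ ≤ _ := by gcongr; positivity
  · refine (h2 T ρ hT hρ).trans ?_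
    have e : ρ ^ (-(α + 1)) = ρ ^ (-s) * ρ ^ (s - (α + 1)) := by
      rw [← Real.rpow_add hρ]; congr 1; ring
    have e' : |T| ^ (-s - 1 / 2) = |T| ^ (-s) * |T| ^ (-(1 / 2) : ℝ) := by
      rw [← Real.rpow_add hT0]; congr 1
    have h3 : ρ ^ (-s) ≤ m ^ (-s) * |T| ^ (-s) := by
      rw [← Real.mul_rpow hm.le hT0.le]
      exact Real.rpow_le_rpow_of_nonpos (by positivity) h (by linarith)
    calc C2 * |T| ^ (-(1 / 2) : ℝ) * ρ ^ (-(α + 1))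
        ≤ C2 * |T| ^ (-(1 / 2) : ℝ) * ((m ^ (-s) * |T| ^ (-s)) * ρ ^ (s - (α + 1))) := by
          rw [e]; gcongr
      _ = (0 + C2 * m ^ (-s)) * |T| ^ (-s - 1 / 2) * ρ ^ (s - (α + 1)) := by rw [e']; ring
      _ ≤ _ := by gcongr; positivity

/-! ### The kernel -/

lemma cutoff_bounds {ψ : ℝ → ℝ} (hψ : IsCutoff ψ) :
    ∃ a b : ℝ, 0 < a ∧ a ≤ b ∧ (∀ x < a, ψ x = 0) ∧ ∀ x, b < x → ψ x = 0 := by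
  obtain ⟨-, hc, hs⟩ := hψ
  have hK : IsCompact (tsupport ψ) := hc
  rcases (tsupport ψ).eq_empty_or_nonempty with h | h
  · have h0 : ∀ x, ψ x = 0 := fun x => image_eq_zero_of_notMem_tsupport (by simp [h])
    exact ⟨1, 1, one_pos, le_rfl, fun x _ => h0 x, fun x _ => h0 x⟩
  · obtain ⟨a, ha, hal⟩ := hK.exists_isLeast h
    obtain ⟨b, hb, hbu⟩ := hK.exists_isGreatest h
    exact ⟨a, b, hs ha, hal hb,
      fun x hx => image_eq_zero_of_notMem_tsupport fun h => absurd (hal h) (not_le.2 hx),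
      fun x hx => image_eq_zero_of_notMem_tsupport fun h => absurd (hbu h) (not_le.2 hx)⟩

/-- The substitution `x = hλ` in dimension `n = k + 2`: the kernel depends on `t / h²` and `σ / h`
only, apart from the factor `h^{-n}`. The powers of `σ` cancel against those in `𝒥_ν`. -/
lemma freeKernel_rescale (k : ℕ) (hk : 2 ≤ k) {ψ : ℝ → ℝ} {m M : ℝ} (hm : 0 < m) (hmM : m ≤ M)
    (h0 : ∀ x, 0 < x → x ∉ Ioc m M → ψ (x ^ 2) = 0) :
    ∃ c : ℝ, ∀ h σ t : ℝ, 0 < h → 0 < σ →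
      freeKernel (k + 2) ψ h σ t = ((c * (h ^ (k + 2))⁻¹ : ℝ) : ℂ) *
        ∫ x in m..M, ph (t / h ^ 2) 0 x *
          (((ψ (x ^ 2) * x ^ (k + 1) : ℝ) : ℂ) * (bj (((k : ℝ) - 1) / 2) (σ / h * x) : ℂ)) := by
  have hk' : (2 : ℝ) ≤ k := by exact_mod_cast hk
  obtain ⟨c, hc⟩ := calJ_eq (α := ((k : ℝ) - 1) / 2) (by linarith)
  refine ⟨(2 * π) ^ (-((((k + 2 : ℕ) : ℝ) - 2) / 2) - 1) * c, fun h σ t hh hσ => ?_⟩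
  set G : ℝ → ℂ := fun x => ph (t / h ^ 2) 0 x *
    (((ψ (x ^ 2) * x ^ (k + 1) : ℝ) : ℂ) * (bj (((k : ℝ) - 1) / 2) (σ / h * x) : ℂ)) with hG
  have hGint : ∫ x in Ioi (0 : ℝ), G x = ∫ x in m..M, G x := by
    rw [intervalIntegral.integral_of_le hmM]
    refine (setIntegral_eq_of_subset_of_forall_sdiff_eq_zero measurableSet_Ioi
      (fun x hx => hm.trans hx.1) fun x hx => ?_)
    simp [hG, h0 x hx.1 hx.2]
  have hscale := integral_comp_mul_left_Ioi G 0 hh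
  rw [mul_zero, hGint] at hscale
  have hν : (((k + 2 : ℕ) : ℝ) - 2) / 2 = ((k : ℝ) - 1) / 2 + 1 / 2 := by push_cast; ring
  have hint : ∫ lam in Set.Ioi (0 : ℝ),
      Complex.exp (Complex.I * t * lam ^ 2) * ((ψ (h ^ 2 * lam ^ 2) : ℝ) : ℂ) *
        ((calJ ((((k + 2 : ℕ) : ℝ) - 2) / 2) (σ * lam) : ℝ) : ℂ) * (lam : ℂ) =
      ∫ lam in Set.Ioi (0 : ℝ), ((c * σ ^ k * (h ^ (k + 1))⁻¹ : ℝ) : ℂ) * G (h * lam) := by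
    refine setIntegral_congr_fun measurableSet_Ioi fun x (hx : 0 < x) => ?_
    have e1 : (σ * x) ^ (2 * (((k : ℝ) - 1) / 2) + 1) = σ ^ k * x ^ k := by
      rw [← mul_pow, ← Real.rpow_natCast]; congr 1; ring
    have e2 : ph (t / h ^ 2) 0 (h * x) = Complex.exp (Complex.I * t * x ^ 2) := by
      rw [ph]; congr 1
      have : t / h ^ 2 * (h * x) ^ 2 + 0 * (h * x) = t * x ^ 2 := by field_simp; ring
      rw [this]; push_cast; ring
    have e3 : σ / h * (h * x) = σ * x := by field_simp
    have hhc : (h : ℂ) ≠ 0 := by exact_mod_cast hh.ne'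
    simp only [hG]
    rw [hν, hc _ (by positivity), e1, e2, e3, mul_pow h x 2]
    push_cast
    field_simp
    ring
  have hσ' : σ ^ (-2 * ((((k + 2 : ℕ) : ℝ) - 2) / 2)) = (σ ^ k)⁻¹ := by
    rw [← Real.rpow_natCast, ← Real.rpow_neg hσ.le]; congr 1; push_cast; ring
  rw [freeKernel, hint, integral_const_mul, hscale, hσ', Complex.real_smul]
  have hhc : (h : ℂ) ≠ 0 := by exact_mod_cast hh.ne'
  have hσc : (σ : ℂ) ≠ 0 := by exact_mod_cast hσ.ne'
  generalize ((2 * π) ^ (-((((k + 2 : ℕ) : ℝ) - 2) / 2) - 1) : ℝ) = d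
  push_cast
  field_simp
  ring

/-- **estimate (2.5).** For every `0 ≤ s ≤ (n−1)/2` there is `C > 0` with
`|K_h(σ,t)| ≤ C h^{s-(n-1)/2} |t|^{-s-1/2} σ^{-(n-1)/2+s}` for all `t ≠ 0`, `σ > 0`,
`0 < h ≤ 1`. -/
theorem freeKernel_bound
    (n : ℕ) (hn : 4 ≤ n) (ψ : ℝ → ℝ) (hψ : IsCutoff ψ)
    (s : ℝ) (hs0 : 0 ≤ s) (hs1 : s ≤ ((n : ℝ) - 1) / 2) :
    ∃ C : ℝ, 0 < C ∧ ∀ t : ℝ, t ≠ 0 → ∀ σ : ℝ, 0 < σ → ∀ h : ℝ, 0 < h → h ≤ 1 →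
      ‖freeKernel n ψ h σ t‖ ≤
        C * h ^ (s - ((n : ℝ) - 1) / 2) * |t| ^ (-s - 1 / 2) *
          σ ^ (-((n : ℝ) - 1) / 2 + s) := by
  obtain ⟨k, rfl⟩ : ∃ k, n = k + 2 := ⟨n - 2, by omega⟩
  have hk : 2 ≤ k := by omega
  have hk' : (2 : ℝ) ≤ k := by exact_mod_cast hk
  obtain ⟨a, b, ha, hab, hψa, hψb⟩ := cutoff_bounds hψ
  have hsa : 0 < √a := Real.sqrt_pos.2 ha
  have hsab : √a ≤ √b := Real.sqrt_le_sqrt hab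
  have hb : 0 ≤ b := ha.le.trans hab
  have hlow : ∀ x, 0 < x → x < √a → ψ (x ^ 2) = 0 := fun x hx hxa =>
    hψa _ ((Real.lt_sqrt hx.le).1 hxa)
  have hhigh : ∀ x, √b < x → ψ (x ^ 2) = 0 := fun x hx =>
    hψb _ ((Real.sqrt_lt' (hx.trans_le' (Real.sqrt_nonneg _))).1 hx)
  -- The interval is larger than the support of `ψ(x²)`, so the amplitude vanishes near its ends.
  set m := √a / 2 with hmdef
  set M := √b + 1 with hMdef
  have hm : 0 < m := by positivity
  have hmM : m ≤ M := by linarith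
  set f : ℝ → ℂ := fun x => ((ψ (x ^ 2) * x ^ (k + 1) : ℝ) : ℂ) with hfdef
  have hf : ContDiff ℝ (⊤ : ℕ∞) f := by
    have h1 : ContDiff ℝ (⊤ : ℕ∞) fun x : ℝ => ψ (x ^ 2) * x ^ (k + 1) :=
      (hψ.1.comp (contDiff_id.pow 2)).mul (contDiff_id.pow (k + 1))
    exact Complex.ofRealCLM.contDiff.comp h1
  have hfm : f =ᶠ[𝓝 m] 0 := by
    filter_upwards [Ioo_mem_nhds hm (by linarith : m < √a)] with x hx
    simp [hfdef, hlow x hx.1 hx.2]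
  have hfM : f =ᶠ[𝓝 M] 0 := by
    filter_upwards [Ioi_mem_nhds (by linarith : √b < M)] with x hx
    simp [hfdef, hhigh x hx]
  obtain ⟨c, hc⟩ := freeKernel_rescale k hk hm hmM (ψ := ψ) fun x hx hxn => by
    by_cases h1 : m < x
    · exact hhigh x (by
        have : ¬ x ≤ M := fun h2 => hxn ⟨h1, h2⟩
        linarith)
    · exact hlow x hx (by linarith)
  obtain ⟨C, hC0, hC⟩ := claim (α := ((k : ℝ) - 1) / 2) (by linarith) hm hmM hf hfm hfM hs0
    (by push_cast at hs1; linarith)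
  refine ⟨|c| * C + 1, by positivity, fun t ht σ hσ h hh _ => ?_⟩
  have ht0 : 0 < |t| := abs_pos.2 ht
  have hT : t / h ^ 2 ≠ 0 := div_ne_zero ht (by positivity)
  have key := hC (t / h ^ 2) (σ / h) hT (by positivity)
  rw [hc h σ t hh hσ, norm_mul, Complex.norm_real, norm_mul, Real.norm_eq_abs,
    Real.norm_of_nonneg (by positivity)]
  -- The exponents of `h` add up to `-n + (2s + 1) + ((n - 1)/2 - s) = s - (n - 1)/2`.
  have e : (h ^ (k + 2))⁻¹ * (|t / h ^ 2| ^ (-s - 1 / 2) *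
      (σ / h) ^ (s - (((k : ℝ) - 1) / 2 + 1))) =
      h ^ (s - (((k + 2 : ℕ) : ℝ) - 1) / 2) * |t| ^ (-s - 1 / 2) *
          σ ^ (-(((k + 2 : ℕ) : ℝ) - 1) / 2 + s) := by
    rw [abs_div, abs_of_pos (by positivity : 0 < h ^ 2), Real.div_rpow ht0.le (by positivity),
      Real.div_rpow hσ.le hh.le, ← Real.rpow_natCast h 2, ← Real.rpow_mul hh.le,
      ← Real.rpow_natCast h (k + 2), ← Real.rpow_neg hh.le, div_eq_mul_inv (|t| ^ _),
      div_eq_mul_inv (σ ^ _),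
      ← Real.rpow_neg hh.le, ← Real.rpow_neg hh.le]
    have e1 : h ^ (s - (((k + 2 : ℕ) : ℝ) - 1) / 2) =
        h ^ (-((k + 2 : ℕ) : ℝ)) * h ^ (-(((2 : ℕ) : ℝ) * (-s - 1 / 2))) *
          h ^ (-(s - (((k : ℝ) - 1) / 2 + 1))) := by
      rw [← Real.rpow_add hh, ← Real.rpow_add hh]; congr 1; push_cast; ring
    have e2 : -(((k + 2 : ℕ) : ℝ) - 1) / 2 + s = s - (((k : ℝ) - 1) / 2 + 1) := by
      push_cast; ring
    rw [e1, e2]; ring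
  calc _ ≤ |c| * (h ^ (k + 2))⁻¹ * (C * |t / h ^ 2| ^ (-s - 1 / 2) *
        (σ / h) ^ (s - (((k : ℝ) - 1) / 2 + 1))) := by gcongr
    _ = |c| * C * ((h ^ (k + 2))⁻¹ * (|t / h ^ 2| ^ (-s - 1 / 2) *
        (σ / h) ^ (s - (((k : ℝ) - 1) / 2 + 1)))) := by ring
    _ ≤ (|c| * C + 1) * ((h ^ (k + 2))⁻¹ * (|t / h ^ 2| ^ (-s - 1 / 2) *
        (σ / h) ^ (s - (((k : ℝ) - 1) / 2 + 1)))) := by gcongr; linarith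
    _ = _ := by rw [e]; ring
end
end

section
/- Let n ≥ 4 be an integer, let a > 0, and let χ_a ∈ C^∞(ℝ) be real-valued, supported in [a,+∞), with χ_a = 1 on [2a,+∞). Then there exists a constant C > 0, independent of t and σ, such that for all t ≠ 0 and all σ ∈ ℝ, |∫₀^∞ e^{itλ² + iσλ} λ^{(n-1)/2} χ_a(λ²) dλ| ≤ C |t|^{-n/2} ⟨σ⟩^{(n-1)/2}. -/
/-!
The amplitude `λ ^ b χ(λ²)`, `b = (n - 1)/2`, vanishes near `λ = 0`, so it may be divided by `λ` freely.
Since `e^{i(tλ² + σλ)}` has derivative `i(2tλ + σ) e^{i(tλ² + σλ)}`, integration by parts gives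

  `J(λ g) = (i J(g') - σ J(g)) / (2t)`,

where `J(f) = ∫₀^∞ e^{i(tλ² + σλ)} f(λ) dλ`. With `g` of order `b - 1` this trades one order of growth for a
factor `(1 + |σ|)/|t|`. With the regularizing factor `e^{-eλ}` the identity holds with `σ + ie` for `σ`
(`J_rec`), so iterating it down to absolutely convergent integrals shows that the Abel limit exists
(`J_lim_exists`). It also reduces the claimed bound of order `b` to that of order `b - 1` (`Est.succ`),
hence to the orders `0` (`n` odd) and `1/2` (`n` even).

Both base cases use the primitive `F(r) = ∫₀^r e^{i(tλ² + σλ)} dλ` and `J(f) = -∫ F f'`. In order `0`,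
van der Corput's bound `|F| ≤ 4 |t| ^ (-1/2)` and integrability of `f'` suffice (`est_zero`). In order `1/2`
one further step of the recursion leaves a bounded term and `σ J(g)` with `g` of order `-1/2`; there
`|F(r)|` is bounded by `r`, by `4/|σ|` for `r ≤ |σ|/(4|t|)`, and by `4 |t| ^ (-1/2)` otherwise, and
integrating against `r ^ (-3/2)` yields `|J(g)| ≤ C |σ| ^ (-1/2)` (`J_base_half`, `est_half`).
-/

open MeasureTheory Filter Topology Real Set

noncomputable section

/-- `⟨σ⟩ = (1+σ²)^{1/2}`. -/
def jbR (r : ℝ) : ℝ := Real.sqrt (1 + r ^ 2)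

/-- A real-valued `C^∞(ℝ)` function supported in `[a,+∞)` which equals `1` on `[2a,+∞)`. -/
def IsChi (a : ℝ) (χ : ℝ → ℝ) : Prop :=
  ContDiff ℝ (⊤ : ℕ∞) χ ∧ Function.support χ ⊆ Set.Ici a ∧ ∀ x, 2 * a ≤ x → χ x = 1

/-! ### Amplitudes -/

/-- Smooth profiles that vanish on some `[0, r)`, `r > 0`, and are constant near `+∞`. Only the values on
`[0, ∞)` matter. The amplitudes of order `s` used below are the functions `x ^ s * η x`. -/
structure Amp (η : ℝ → ℝ) : Prop where
  smooth : ContDiff ℝ (⊤ : ℕ∞) η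
  zero : ∃ r : ℝ, 0 < r ∧ ∀ x, 0 ≤ x → x < r → η x = 0
  const : ∃ R c : ℝ, ∀ x, R < x → η x = c

lemma Amp.xderiv {η : ℝ → ℝ} (h : Amp η) : Amp (fun x => x * deriv η x) := by
  obtain ⟨hs, ⟨r, hr, h0⟩, ⟨R, c, hc⟩⟩ := h
  refine ⟨?_, ⟨r, hr, ?_⟩, ⟨R, 0, ?_⟩⟩
  · exact contDiff_id.mul (contDiff_infty_iff_deriv.1 hs).2
  · intro x hx hxr
    rcases hx.eq_or_lt with rfl | hx
    · simp
    · have : η =ᶠ[𝓝 x] fun _ => 0 := by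
        filter_upwards [Ioo_mem_nhds hx hxr] with y hy using h0 y hy.1.le hy.2
      simp [this.deriv_eq]
  · intro x hx
    have : η =ᶠ[𝓝 x] fun _ => c := by
      filter_upwards [Ioi_mem_nhds hx] with y hy using hc y hy
    simp [this.deriv_eq]

lemma Amp.xxderiv {η : ℝ → ℝ} (h : Amp η) : Amp (fun x => x * (x * deriv η x)) := by
  obtain ⟨hs, ⟨r, hr, h0⟩, _⟩ := h.xderiv
  obtain ⟨R, c, hc⟩ := h.const
  refine ⟨contDiff_id.mul hs, ⟨r, hr, fun x hx hxr => by simp [h0 x hx hxr]⟩, ⟨R, 0, ?_⟩⟩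
  intro x hx
  have : η =ᶠ[𝓝 x] fun _ => c := by
    filter_upwards [Ioi_mem_nhds hx] with y hy using hc y hy
  simp [this.deriv_eq]

lemma Amp.lin {η θ : ℝ → ℝ} (h : Amp η) (h' : Amp θ) (k : ℝ) :
    Amp (fun x => k * η x + θ x) := by
  obtain ⟨hs, ⟨r, hr, h0⟩, ⟨R, c, hc⟩⟩ := h
  obtain ⟨hs', ⟨r', hr', h0'⟩, ⟨R', c', hc'⟩⟩ := h'
  refine ⟨(contDiff_const.mul hs).add hs', ⟨min r r', lt_min hr hr', ?_⟩,
    ⟨max R R', k * c + c', ?_⟩⟩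
  · intro x hx hxr
    simp [h0 x hx (hxr.trans_le (min_le_left _ _)), h0' x hx (hxr.trans_le (min_le_right _ _))]
  · intro x hx
    simp [hc x ((le_max_left _ _).trans_lt hx), hc' x ((le_max_right _ _).trans_lt hx)]

lemma Amp.bdd {η : ℝ → ℝ} (h : Amp η) : ∃ M : ℝ, 0 < M ∧ ∀ x, 0 ≤ x → |η x| ≤ M := by
  obtain ⟨R, c, hc⟩ := h.const
  obtain ⟨M, hM⟩ := (isCompact_Icc (a := (0:ℝ)) (b := R)).exists_bound_of_continuousOn
    h.smooth.continuous.continuousOn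
  refine ⟨max 1 (max M |c|), by positivity, fun x hx => ?_⟩
  rcases le_or_gt x R with hx' | hx'
  · exact (hM x ⟨hx, hx'⟩).trans ((le_max_left _ _).trans (le_max_right _ _))
  · rw [hc x hx']; exact (le_max_right _ _).trans (le_max_right _ _)

/-- Since `η` vanishes near `0`, an amplitude of order `s` is also one of any higher order `p`. -/
lemma Amp.rpow_bdd {η : ℝ → ℝ} (h : Amp η) {s p : ℝ} (hsp : s ≤ p) :
    ∃ M : ℝ, 0 < M ∧ ∀ x, 0 < x → |x ^ s * η x| ≤ M * x ^ p := by
  obtain ⟨M, hM, hb⟩ := h.bdd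
  obtain ⟨r, hr, h0⟩ := h.zero
  refine ⟨M * r ^ (s - p), by positivity, fun x hx => ?_⟩
  rcases lt_or_ge x r with hxr | hxr
  · rw [h0 x hx.le hxr]; simp; positivity
  · have h1 : x ^ s = x ^ (s - p) * x ^ p := by rw [← rpow_add hx]; simp
    have h2 : x ^ (s - p) ≤ r ^ (s - p) := rpow_le_rpow_of_nonpos hr hxr (by linarith)
    rw [abs_mul, abs_of_pos (rpow_pos_of_pos hx s), h1]
    calc _ ≤ r ^ (s - p) * x ^ p * M := by
          gcongr
          exact hb x hx.le
      _ = _ := by ring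

lemma Amp.contOn {η : ℝ → ℝ} (h : Amp η) (s : ℝ) :
    ContinuousOn (fun x => x ^ s * η x) (Ici 0) := by
  intro x hx
  rcases (mem_Ici.1 hx).eq_or_lt with rfl | hx
  · obtain ⟨r, hr, h0⟩ := h.zero
    have : (fun x => x ^ s * η x) =ᶠ[𝓝[Ici 0] (0:ℝ)] fun _ => 0 := by
      filter_upwards [self_mem_nhdsWithin, mem_nhdsWithin_of_mem_nhds (Iio_mem_nhds hr)] with y hy hy'
      simp [h0 y hy hy']
    exact (continuousWithinAt_const (b := (0:ℝ))).congr_of_eventuallyEq this (by simp [h0 0 le_rfl hr])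
  · exact ((continuousAt_rpow_const x s (Or.inl hx.ne')).mul
      h.smooth.continuous.continuousAt).continuousWithinAt

lemma Amp.hasDeriv {η : ℝ → ℝ} (h : Amp η) (s : ℝ) {x : ℝ} (hx : 0 < x) :
    HasDerivAt (fun x => x ^ s * η x) (x ^ (s - 1) * (s * η x + x * deriv η x)) x := by
  have h1 := (hasDerivAt_rpow_const (x := x) (p := s) (Or.inl hx.ne'))
  have h2 := (h.smooth.differentiable (by simp) x).hasDerivAt
  refine (h1.mul h2).congr_deriv ?_
  have : x ^ s = x ^ (s - 1) * x := by rw [← rpow_add_one hx.ne']; simp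
  rw [this]; ring

/-! ### Regularized oscillatory integrals and the order-lowering recursion -/

/-- The oscillating factor `e^{i(t x² + σ x)}`. -/
def osc (t σ x : ℝ) : ℂ := Complex.exp (Complex.I * (t * x ^ 2 + σ * x))

lemma norm_osc (t σ x : ℝ) : ‖osc t σ x‖ = 1 := by
  have : Complex.I * (t * x ^ 2 + σ * x) = ((t * x ^ 2 + σ * x : ℝ) : ℂ) * Complex.I := by
    push_cast; ring
  rw [osc, this, Complex.norm_exp_ofReal_mul_I]

lemma hasDerivAt_osc (t σ x : ℝ) :
    HasDerivAt (osc t σ) (Complex.I * (2 * t * x + σ) * osc t σ x) x := by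
  have h0 : HasDerivAt (fun x : ℝ => (x : ℂ)) 1 x := Complex.ofRealCLM.hasDerivAt
  have := ((((h0.pow 2).const_mul (t:ℂ)).add (h0.const_mul (σ:ℂ))).const_mul Complex.I).cexp
  refine this.congr_deriv ?_
  simp [osc]; ring

lemma continuous_osc (t σ : ℝ) : Continuous (osc t σ) := by
  unfold osc; fun_prop

/-- The Abel-regularized integral `∫₀^∞ e^{i(t x² + σ x)} e^{-e x} x ^ s η(x) dx`; absolutely convergent for
`e > 0`. -/
def J (t σ e s : ℝ) (η : ℝ → ℝ) : ℂ :=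
  ∫ x in Ioi (0:ℝ), osc t σ x * Real.exp (-e * x) * ((x ^ s * η x : ℝ) : ℂ)

lemma Amp.isBigO {η : ℝ → ℝ} (h : Amp η) {e : ℝ} (he : 0 < e) (t σ s : ℝ) :
    (fun x => osc t σ x * Real.exp (-e * x) * ((x ^ s * η x : ℝ) : ℂ)) =O[atTop]
      fun x => Real.exp (-(e/2) * x) := by
  obtain ⟨M, hM, hb⟩ := h.rpow_bdd (le_refl s)
  have h1 := (isLittleO_rpow_exp_pos_mul_atTop s (half_pos he)).isBigO
  have h2 : (fun x => osc t σ x * Real.exp (-e * x) * ((x ^ s * η x : ℝ) : ℂ)) =O[atTop]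
      fun x => Real.exp (-e * x) * x ^ s := by
    refine Asymptotics.IsBigO.of_bound M ?_
    filter_upwards [eventually_gt_atTop 0] with x hx
    rw [norm_mul, norm_mul, norm_osc, Complex.norm_real, Complex.norm_real, norm_eq_abs, norm_eq_abs,
      norm_mul, norm_eq_abs, norm_eq_abs, one_mul, abs_of_pos (rpow_pos_of_pos hx s)]
    calc _ ≤ |Real.exp (-e * x)| * (M * x ^ s) := by gcongr; exact hb x hx
      _ = _ := by ring
  refine h2.trans ?_
  refine ((Asymptotics.isBigO_refl (fun x => Real.exp (-e * x)) atTop).mul h1).trans ?_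
  refine Asymptotics.IsBigO.of_bound 1 (Eventually.of_forall fun x => ?_)
  rw [← Real.exp_add, one_mul]
  apply le_of_eq; congr 2; ring

lemma Amp.integrable {η : ℝ → ℝ} (h : Amp η) {e : ℝ} (he : 0 < e) (t σ s : ℝ) :
    IntegrableOn (fun x => osc t σ x * Real.exp (-e * x) * ((x ^ s * η x : ℝ) : ℂ)) (Ioi 0) := by
  refine (integrableOn_Ici_iff_integrableOn_Ioi (by finiteness)).mp <|
    (ContinuousOn.locallyIntegrableOn ?_ measurableSet_Ici).integrableOn_of_isBigO_atTop
      (h.isBigO he t σ s) ⟨Ioi 0, Ioi_mem_atTop 0, exp_neg_integrableOn_Ioi 0 (half_pos he)⟩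
  refine ContinuousOn.mul (Continuous.continuousOn ?_) ?_
  · have := continuous_osc t σ
    fun_prop
  · exact Complex.continuous_ofReal.comp_continuousOn (h.contOn s)

lemma Amp.tendsto {η : ℝ → ℝ} (h : Amp η) {e : ℝ} (he : 0 < e) (t σ s : ℝ) :
    Tendsto (fun x => osc t σ x * Real.exp (-e * x) * ((x ^ s * η x : ℝ) : ℂ)) atTop (𝓝 0) := by
  refine (h.isBigO he t σ s).trans_tendsto ?_
  refine Real.tendsto_exp_atBot.comp ?_
  exact tendsto_id.const_mul_atTop_of_neg (by linarith)

lemma Amp.hasDeriv_full {η : ℝ → ℝ} (h : Amp η) (e t σ s : ℝ) {x : ℝ} (hx : 0 < x) :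
    HasDerivAt (fun x => osc t σ x * Real.exp (-e * x) * ((x ^ s * η x : ℝ) : ℂ))
      (osc t σ x * Real.exp (-e * x) * ((x ^ s * η x : ℝ) : ℂ) * (Complex.I * (2 * t * x + σ) - e)
       + osc t σ x * Real.exp (-e * x) *
        ((x ^ (s - 1) * (s * η x + x * deriv η x) : ℝ) : ℂ)) x := by
  have h1 := (h.hasDeriv s hx).ofReal_comp
  have h2 : HasDerivAt (fun x : ℝ => Real.exp (-e * x)) (Real.exp (-e * x) * -e) x := by
    simpa using ((hasDerivAt_id x).const_mul (-e)).exp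
  refine (((hasDerivAt_osc t σ x).mul h2.ofReal_comp).mul h1).congr_deriv ?_
  simp only [Pi.mul_apply]
  push_cast
  ring

/-- Integrating the derivative of `e^{i(t x² + σ x) - e x} x ^ (s - 1) η(x)` over `(0, ∞)` gives zero, which
expresses `J` of order `s` through orders `s - 1` and `s - 2` with a gain of `1/t`. -/
lemma J_rec {η : ℝ → ℝ} (h : Amp η) {e t : ℝ} (he : 0 < e) (ht : t ≠ 0) (σ s : ℝ) :
    J t σ e s η = (1 / (2 * t)) *
      (Complex.I * J t σ e (s - 2) (fun x => (s - 1) * η x + x * deriv η x)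
        - (σ + Complex.I * e) * J t σ e (s - 1) η) := by
  have hη := h.lin h.xderiv (s - 1)
  have i0 := h.integrable he t σ s
  have i1 := h.integrable he t σ (s - 1)
  have i2 := hη.integrable he t σ (s - 2)
  have key := integral_Ioi_of_hasDerivAt_of_tendsto (a := 0) (m := (0:ℂ))
    (f := fun x => osc t σ x * Real.exp (-e * x) * ((x ^ (s - 1) * η x : ℝ) : ℂ))
    (f' := fun x => (2 * Complex.I * t) * (osc t σ x * Real.exp (-e * x) * ((x ^ s * η x : ℝ) : ℂ))
      + ((Complex.I * σ - e) * (osc t σ x * Real.exp (-e * x) * ((x ^ (s - 1) * η x : ℝ) : ℂ))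
      + osc t σ x * Real.exp (-e * x) *
        ((x ^ (s - 2) * ((s - 1) * η x + x * deriv η x) : ℝ) : ℂ)))
    ?_ ?_ ?_ (h.tendsto he t σ (s - 1))
  · have hη0 : η 0 = 0 := by
      obtain ⟨r, hr, h0⟩ := h.zero
      exact h0 0 le_rfl hr
    have i12 := (i1.const_mul (Complex.I * σ - e)).add i2
    simp only [Pi.add_def] at i12
    rw [integral_add (i0.const_mul _) i12,
      integral_add (i1.const_mul _) i2, integral_const_mul, integral_const_mul] at key
    simp only [hη0, mul_zero, Complex.ofReal_zero, sub_zero] at key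
    change 2 * Complex.I * t * J t σ e s η + ((Complex.I * σ - e) * J t σ e (s - 1) η
      + J t σ e (s - 2) (fun x => (s - 1) * η x + x * deriv η x)) = 0 at key
    have ht' : (t : ℂ) ≠ 0 := by exact_mod_cast ht
    field_simp
    linear_combination (-Complex.I) * key + (2 * t * J t σ e s η + σ * J t σ e (s-1) η) * Complex.I_mul_I
  · refine ContinuousWithinAt.mul (Continuous.continuousWithinAt ?_) ?_
    · have := continuous_osc t σ
      fun_prop
    · exact Complex.continuous_ofReal.continuousAt.comp_continuousWithinAt
        (h.contOn (s - 1) 0 (by simp))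
  · intro x hx
    have hx : 0 < x := hx
    refine (h.hasDeriv_full e t σ (s - 1) hx).congr_deriv ?_
    have e1 : x ^ s = x ^ (s - 1) * x := by rw [← rpow_add_one hx.ne']; simp
    have e2 : s - 1 - 1 = s - 2 := by ring
    rw [e1, e2]; push_cast; ring
  · exact (i0.const_mul _).add ((i1.const_mul _).add i2)

/-- Below order `-1` the integral converges absolutely, uniformly in `t` and `σ`. -/
lemma J_lim_low {η : ℝ → ℝ} (h : Amp η) {s : ℝ} (hs : s < -1) :
    ∃ M : ℝ, 0 < M ∧ ∀ t σ : ℝ, ∃ L : ℂ, Tendsto (fun e => J t σ e s η) (𝓝[>] 0) (𝓝 L) ∧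
      ‖L‖ ≤ M := by
  obtain ⟨M, hM, hb⟩ := h.bdd
  obtain ⟨r, hr, h0⟩ := h.zero
  have hint : IntegrableOn (fun x : ℝ => ‖x ^ s * η x‖) (Ioi 0) := by
    have : IntegrableOn (fun x : ℝ => ‖x ^ s * η x‖) (Ioi (r/2)) := by
      refine ((integrableOn_Ioi_rpow_of_lt hs (half_pos hr)).const_mul M).mono' ?_ ?_
      · refine ContinuousOn.aestronglyMeasurable ?_ measurableSet_Ioi
        exact ((h.contOn s).mono (fun x hx => (half_pos hr).le.trans (le_of_lt hx))).norm
      · filter_upwards [ae_restrict_mem measurableSet_Ioi] with x hx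
        have hx0 : 0 < x := (half_pos hr).trans hx
        rw [norm_norm, norm_mul, norm_eq_abs, norm_eq_abs, abs_of_pos (rpow_pos_of_pos hx0 s), mul_comm]
        gcongr; exact hb x hx0.le
    rw [← Ioc_union_Ioi_eq_Ioi (half_pos hr).le]
    refine IntegrableOn.union ?_ this
    refine (integrableOn_zero (ε' := ℝ)).congr_fun (fun x hx => ?_) measurableSet_Ioc
    simp [h0 x hx.1.le (hx.2.trans_lt (half_lt_self hr))]
  refine ⟨(∫ x in Ioi (0:ℝ), ‖x ^ s * η x‖) + 1, ?_, fun t σ => ?_⟩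
  · have : 0 ≤ ∫ x in Ioi (0:ℝ), ‖x ^ s * η x‖ := integral_nonneg (fun _ => norm_nonneg _)
    linarith
  refine ⟨∫ x in Ioi (0:ℝ), osc t σ x * ((x ^ s * η x : ℝ) : ℂ), ?_, ?_⟩
  · refine tendsto_integral_filter_of_dominated_convergence _ ?_ ?_ hint ?_
    · filter_upwards [self_mem_nhdsWithin] with e he
      exact (h.integrable he t σ s).aestronglyMeasurable
    · filter_upwards [self_mem_nhdsWithin] with e he
      filter_upwards [ae_restrict_mem measurableSet_Ioi] with x hx
      rw [norm_mul, norm_mul, norm_osc, one_mul, Complex.norm_real, Complex.norm_real]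
      have : ‖Real.exp (-e * x)‖ ≤ 1 := by
        rw [norm_eq_abs, abs_of_pos (exp_pos _), exp_le_one_iff]
        have := mul_pos (mem_Ioi.1 he) (mem_Ioi.1 hx); linarith
      exact mul_le_of_le_one_left (norm_nonneg _) this
    · filter_upwards with x
      have : Tendsto (fun e : ℝ => osc t σ x * Real.exp (-e * x) * ((x ^ s * η x : ℝ) : ℂ)) (𝓝 0)
          (𝓝 (osc t σ x * Real.exp (-0 * x) * ((x ^ s * η x : ℝ) : ℂ))) := by
        apply Continuous.tendsto
        fun_prop
      simpa using this.mono_left nhdsWithin_le_nhds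
  · refine (norm_integral_le_integral_norm _).trans ?_
    simp only [norm_mul (osc _ _ _), norm_osc, one_mul, Complex.norm_real]
    linarith

/-- The recursion `J_rec` in the limit `e → 0`. -/
lemma J_lim_rec {η : ℝ → ℝ} (h : Amp η) {t : ℝ} (ht : t ≠ 0) {σ s : ℝ} {L₁ L₂ : ℂ}
    (h₂ : Tendsto (fun e => J t σ e (s - 2) (fun x => (s - 1) * η x + x * deriv η x)) (𝓝[>] 0) (𝓝 L₂))
    (h₁ : Tendsto (fun e => J t σ e (s - 1) η) (𝓝[>] 0) (𝓝 L₁)) :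
    Tendsto (fun e => J t σ e s η) (𝓝[>] 0)
      (𝓝 ((1 / (2 * t)) * (Complex.I * L₂ - σ * L₁))) := by
  have hc : Tendsto (fun e : ℝ => (σ + Complex.I * e : ℂ)) (𝓝[>] 0) (𝓝 σ) := by
    have : Tendsto (fun e : ℝ => (σ + Complex.I * e : ℂ)) (𝓝 0) (𝓝 (σ + Complex.I * (0:ℝ))) := by
      apply Continuous.tendsto; fun_prop
    simpa using this.mono_left nhdsWithin_le_nhds
  refine (((h₂.const_mul Complex.I).sub (hc.mul h₁)).const_mul (1 / (2 * t) : ℂ)).congr' ?_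
  filter_upwards [self_mem_nhdsWithin] with e he
  exact (J_rec h he ht σ s).symm

lemma J_lim_exists (m : ℕ) : ∀ {η : ℝ → ℝ} (_ : Amp η) {s : ℝ} (_ : s < -1 + m) {t : ℝ} (_ : t ≠ 0)
    (σ : ℝ), ∃ L : ℂ, Tendsto (fun e => J t σ e s η) (𝓝[>] 0) (𝓝 L) := by
  induction m with
  | zero =>
    intro η h s hs t ht σ
    obtain ⟨M, -, hM⟩ := J_lim_low h (by simpa using hs)
    obtain ⟨L, hL, -⟩ := hM t σ
    exact ⟨L, hL⟩
  | succ m ih =>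
    intro η h s hs t ht σ
    push_cast at hs
    obtain ⟨L₁, h₁⟩ := ih h (s := s - 1) (by linarith) ht σ
    obtain ⟨L₂, h₂⟩ := ih (h.lin h.xderiv (s - 1)) (s := s - 2) (by linarith) ht σ
    exact ⟨_, J_lim_rec h ht h₂ h₁⟩

/-! ### The primitive of the oscillating factor -/

/-- First-derivative test for the pure quadratic phase: one integration by parts against `1/x`. -/
lemma osc_zero_tail {t : ℝ} (ht : t ≠ 0) {u v : ℝ} (hu : 0 < u) (huv : u ≤ v) :
    ‖∫ x in u..v, osc t 0 x‖ ≤ 1 / (|t| * u) := by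
  have hv : 0 < v := hu.trans_le huv
  have hpos : ∀ x ∈ uIcc u v, 0 < x := by
    intro x hx; rw [uIcc_of_le huv] at hx; exact hu.trans_le hx.1
  have hd : ∀ x ∈ uIcc u v, HasDerivAt (fun x : ℝ => osc t 0 x * ((x⁻¹ : ℝ) : ℂ))
      (2 * Complex.I * t * osc t 0 x - osc t 0 x * (((x ^ 2)⁻¹ : ℝ) : ℂ)) x := by
    intro x hx
    have hx0 := (hpos x hx).ne'
    refine ((hasDerivAt_osc t 0 x).mul (hasDerivAt_inv hx0).ofReal_comp).congr_deriv ?_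
    have hx0' : (x : ℂ) ≠ 0 := by exact_mod_cast hx0
    push_cast; field_simp; ring
  have hci : ContinuousOn (fun x : ℝ => osc t 0 x * (((x ^ 2)⁻¹ : ℝ) : ℂ)) (uIcc u v) := by
    refine (continuous_osc t 0).continuousOn.mul
      (Complex.continuous_ofReal.comp_continuousOn (ContinuousOn.inv₀ (by fun_prop) ?_))
    intro x hx; have := hpos x hx; positivity
  have i1 : IntervalIntegrable (fun x : ℝ => osc t 0 x * (((x ^ 2)⁻¹ : ℝ) : ℂ)) volume u v :=
    hci.intervalIntegrable
  have i2 : IntervalIntegrable (fun x : ℝ => 2 * Complex.I * t * osc t 0 x) volume u v :=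
    ((continuous_osc t 0).const_mul _).intervalIntegrable _ _
  have key := intervalIntegral.integral_eq_sub_of_hasDerivAt hd (i2.sub i1)
  rw [intervalIntegral.integral_sub i2 i1, intervalIntegral.integral_const_mul] at key
  have hr : ∫ x in u..v, (x ^ 2)⁻¹ = u⁻¹ - v⁻¹ := by
    have := intervalIntegral.integral_eq_sub_of_hasDerivAt (a := u) (b := v)
      (f := fun x : ℝ => -x⁻¹) (f' := fun x => (x ^ 2)⁻¹)
      (fun x hx => (hasDerivAt_inv (hpos x hx).ne').neg.congr_deriv (neg_neg _)) ?_
    · rw [this]; ring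
    · refine ContinuousOn.intervalIntegrable (ContinuousOn.inv₀ (by fun_prop) ?_)
      intro x hx; have := hpos x hx; positivity
  have hb : ‖∫ x in u..v, osc t 0 x * (((x ^ 2)⁻¹ : ℝ) : ℂ)‖ ≤ u⁻¹ - v⁻¹ := by
    rw [← hr]
    refine (intervalIntegral.norm_integral_le_integral_norm huv).trans (le_of_eq ?_)
    congr 1; ext x
    rw [norm_mul, norm_osc, one_mul, Complex.norm_real, norm_eq_abs, abs_of_nonneg (by positivity)]
  have hG : ∀ x : ℝ, 0 < x → ‖osc t 0 x * ((x⁻¹ : ℝ) : ℂ)‖ = x⁻¹ := by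
    intro x hx
    rw [norm_mul, norm_osc, one_mul, Complex.norm_real, norm_eq_abs, abs_of_pos (by positivity)]
  have h2 : ‖2 * Complex.I * t * ∫ x in u..v, osc t 0 x‖ ≤ 2 * u⁻¹ := by
    rw [sub_eq_iff_eq_add.1 key]
    refine (norm_add_le _ _).trans ?_
    have := norm_sub_le (osc t 0 v * ((v⁻¹ : ℝ) : ℂ)) (osc t 0 u * ((u⁻¹ : ℝ) : ℂ))
    rw [hG u hu, hG v hv] at this
    linarith
  rw [norm_mul, norm_mul, norm_mul, Complex.norm_I, Complex.norm_real, norm_eq_abs] at h2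
  have ht' : 0 < |t| := abs_pos.2 ht
  rw [le_div_iff₀ (by positivity)]
  have : ‖(2:ℂ)‖ = 2 := by simp
  rw [this] at h2
  have h3 := mul_le_mul_of_nonneg_right h2 hu.le
  rw [mul_assoc 2 u⁻¹ u, inv_mul_cancel₀ hu.ne'] at h3
  linarith

lemma osc_zero_neg (t x : ℝ) : osc t 0 (-x) = osc t 0 x := by
  simp [osc]

lemma osc_zero_from_zero {t : ℝ} (ht : t ≠ 0) {v : ℝ} (hv : 0 ≤ v) :
    ‖∫ x in (0:ℝ)..v, osc t 0 x‖ ≤ 2 / √|t| := by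
  have ht' : 0 < |t| := abs_pos.2 ht
  have hs : 0 < √|t| := sqrt_pos.2 ht'
  have hss : √|t| * √|t| = |t| := mul_self_sqrt ht'.le
  have triv : ∀ w : ℝ, 0 ≤ w → ‖∫ x in (0:ℝ)..w, osc t 0 x‖ ≤ w := by
    intro w hw
    have := intervalIntegral.norm_integral_le_of_norm_le_const (a := 0) (b := w) (C := 1)
      (f := osc t 0) (fun x _ => (norm_osc t 0 x).le)
    simpa [abs_of_nonneg hw] using this
  have e : 2 / √|t| = 1 / √|t| + 1 / √|t| := by ring
  rcases le_total v (1 / √|t|) with h | h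
  · have := triv v hv
    have : 0 < 1 / √|t| := by positivity
    linarith
  · have hδ : 0 < 1 / √|t| := by positivity
    rw [← intervalIntegral.integral_add_adjacent_intervals (b := 1 / √|t|)
      ((continuous_osc t 0).intervalIntegrable _ _) ((continuous_osc t 0).intervalIntegrable _ _), e]
    refine (norm_add_le _ _).trans (add_le_add (triv _ hδ.le) ?_)
    refine (osc_zero_tail ht hδ h).trans (le_of_eq ?_)
    nth_rewrite 1 [← hss]; field_simp

lemma osc_zero_reflect (t u v : ℝ) :
    ∫ x in (-v)..(-u), osc t 0 x = ∫ x in u..v, osc t 0 x := by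
  rw [← intervalIntegral.integral_comp_neg]
  simp only [osc_zero_neg]

lemma osc_zero_le {t : ℝ} (ht : t ≠ 0) (u v : ℝ) :
    ‖∫ x in u..v, osc t 0 x‖ ≤ 4 / √|t| := by
  have h : ∀ v : ℝ, ‖∫ x in (0:ℝ)..v, osc t 0 x‖ ≤ 2 / √|t| := by
    intro v
    rcases le_total 0 v with hv | hv
    · exact osc_zero_from_zero ht hv
    · rw [intervalIntegral.integral_symm, norm_neg, ← osc_zero_reflect, neg_zero]
      exact osc_zero_from_zero ht (by linarith)
  rw [← intervalIntegral.integral_interval_sub_left (a := 0)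
    ((continuous_osc t 0).intervalIntegrable _ _) ((continuous_osc t 0).intervalIntegrable _ _)]
  refine (norm_sub_le _ _).trans ?_
  have := h u; have := h v
  have e : 4 / √|t| = 2 / √|t| + 2 / √|t| := by ring
  linarith

/-- The primitive `∫₀^r e^{i(t x² + σ x)} dx` of the oscillating factor. -/
def oscPrim (t σ r : ℝ) : ℂ := ∫ x in (0:ℝ)..r, osc t σ x

lemma hasDerivAt_oscPrim (t σ r : ℝ) : HasDerivAt (oscPrim t σ) (osc t σ r) r :=
  intervalIntegral.integral_hasDerivAt_right ((continuous_osc t σ).intervalIntegrable _ _)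
    ((continuous_osc t σ).stronglyMeasurableAtFilter _ _) (continuous_osc t σ).continuousAt

/-- Completing the square. -/
lemma norm_oscPrim {t : ℝ} (ht : t ≠ 0) (σ r : ℝ) :
    ‖oscPrim t σ r‖ = ‖∫ x in (σ / (2 * t))..(r + σ / (2 * t)), osc t 0 x‖ := by
  have h : ∀ x : ℝ, osc t σ x =
      Complex.exp (((-(σ ^ 2 / (4 * t)) : ℝ) : ℂ) * Complex.I) * osc t 0 (x + σ / (2 * t)) := by
    intro x
    have ht' : (t : ℂ) ≠ 0 := by exact_mod_cast ht
    rw [osc, osc, ← Complex.exp_add]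
    congr 1
    push_cast; field_simp; ring
  simp only [oscPrim, h]
  rw [intervalIntegral.integral_const_mul, norm_mul, Complex.norm_exp_ofReal_mul_I, one_mul,
    intervalIntegral.integral_comp_add_right (fun x => osc t 0 x), zero_add]

lemma oscPrim_le {t : ℝ} (ht : t ≠ 0) (σ r : ℝ) : ‖oscPrim t σ r‖ ≤ 4 / √|t| := by
  rw [norm_oscPrim ht]; exact osc_zero_le ht _ _

lemma oscPrim_le_self (t σ : ℝ) {r : ℝ} (hr : 0 ≤ r) : ‖oscPrim t σ r‖ ≤ r := by
  have := intervalIntegral.norm_integral_le_of_norm_le_const (a := 0) (b := r) (C := 1)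
      (f := osc t σ) (fun x _ => (norm_osc t σ x).le)
  simpa [oscPrim, abs_of_nonneg hr] using this

/-- Up to half the distance of the critical point `-σ/(2t)` the phase has derivative of size at least
`|σ|/2`. -/
lemma oscPrim_le_inv {t σ : ℝ} (ht : t ≠ 0) (hσ : σ ≠ 0) {r : ℝ} (hr : 0 ≤ r)
    (h : r ≤ |σ| / (4 * |t|)) : ‖oscPrim t σ r‖ ≤ 4 / |σ| := by
  have ht' : 0 < |t| := abs_pos.2 ht
  have hσ' : 0 < |σ| := abs_pos.2 hσ
  have hc : |σ / (2 * t)| = 2 * (|σ| / (4 * |t|)) := by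
    rw [abs_div, abs_mul, abs_two]; field_simp; norm_num
  have hq : 0 < |σ| / (4 * |t|) := by positivity
  have fin : ∀ u : ℝ, |σ| / (4 * |t|) ≤ u → 1 / (|t| * u) ≤ 4 / |σ| := by
    intro u hu
    calc 1 / (|t| * u) ≤ 1 / (|t| * (|σ| / (4 * |t|))) := by gcongr
      _ = 4 / |σ| := by field_simp
  rw [norm_oscPrim ht]
  generalize σ / (2 * t) = c at *
  rcases le_total 0 c with h0 | h0
  · rw [abs_of_nonneg h0] at hc
    exact (osc_zero_tail ht (by linarith) (by linarith)).trans (fin _ (by linarith))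
  · rw [abs_of_nonpos h0] at hc
    rw [← osc_zero_reflect]
    exact (osc_zero_tail ht (by linarith) (by linarith)).trans (fin _ (by linarith))

/-- Integration by parts moving the derivative from `oscPrim` to the regularized amplitude, stated as a
bound: any integrable majorant `B` of `|oscPrim|` times the derivative controls `J`. -/
lemma J_le_of_bound {η : ℝ → ℝ} (h : Amp η) {e t : ℝ} (he : 0 < e) (ht : t ≠ 0) (σ s : ℝ)
    {B : ℝ → ℝ} (hB : IntegrableOn B (Ioi 0))
    (hb : ∀ x, 0 < x → ‖oscPrim t σ x‖ *
      (|x ^ (s - 1) * (s * η x + x * deriv η x)| + e * Real.exp (-e * x) * |x ^ s * η x|) ≤ B x) :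
    ‖J t σ e s η‖ ≤ ∫ x in Ioi (0:ℝ), B x := by
  have osc0 : ∀ x, osc 0 0 x = 1 := fun x => by simp [osc]
  have hη := h.lin h.xderiv s
  have ig := h.integrable he t σ s
  have j1 := h.integrable he 0 0 s
  have j2 := hη.integrable he 0 0 (s - 1)
  have jt := h.tendsto he 0 0 s
  simp only [osc0, one_mul] at j1 j2 jt
  have hcont : Continuous (oscPrim t σ) :=
    continuous_iff_continuousAt.2 fun x => (hasDerivAt_oscPrim t σ x).continuousAt
  have key := integral_Ioi_mul_deriv_eq_deriv_mul (a := 0) (a' := (0:ℂ)) (b' := (0:ℂ))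
    (u := fun x => (Real.exp (-e * x) : ℂ) * ((x ^ s * η x : ℝ) : ℂ))
    (u' := fun x => (Real.exp (-e * x) : ℂ) * ((x ^ (s - 1) * (s * η x + x * deriv η x) : ℝ) : ℂ)
      - e * ((Real.exp (-e * x) : ℂ) * ((x ^ s * η x : ℝ) : ℂ)))
    (v := oscPrim t σ) (v' := osc t σ) ?_ (fun x _ => hasDerivAt_oscPrim t σ x) ?_ ?_ ?_ ?_
  · have hJ : J t σ e s η = ∫ x in Ioi (0:ℝ),
        (Real.exp (-e * x) : ℂ) * ((x ^ s * η x : ℝ) : ℂ) * osc t σ x := by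
      unfold J; congr 1; ext x; ring
    rw [hJ, key, sub_zero, zero_sub, norm_neg]
    refine norm_integral_le_of_norm_le hB ?_
    filter_upwards [ae_restrict_mem measurableSet_Ioi] with x hx
    have hx : 0 < x := hx
    refine le_trans ?_ (hb x hx)
    rw [norm_mul, mul_comm]
    refine mul_le_mul_of_nonneg_left ?_ (norm_nonneg _)
    refine (norm_sub_le _ _).trans ?_
    rw [norm_mul, norm_mul, norm_mul, Complex.norm_real, Complex.norm_real, Complex.norm_real,
      Complex.norm_real, norm_eq_abs, norm_eq_abs, norm_eq_abs, norm_eq_abs, abs_of_pos he,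
      abs_of_pos (exp_pos _), mul_assoc]
    have : Real.exp (-e * x) ≤ 1 := by
      rw [exp_le_one_iff]; have := mul_pos he hx; linarith
    have := mul_le_of_le_one_left (abs_nonneg (x ^ (s - 1) * (s * η x + x * deriv η x))) this
    linarith
  · intro x hx
    have := h.hasDeriv_full e 0 0 s hx
    simp only [osc0, one_mul] at this
    refine this.congr_deriv ?_
    push_cast; ring
  · refine ig.congr_fun (fun x _ => ?_) measurableSet_Ioi
    simp only [Pi.mul_apply]; ring
  · refine Integrable.mul_bdd (c := 4 / √|t|) (j2.sub (j1.const_mul _)) hcont.aestronglyMeasurable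
      (Eventually.of_forall fun x => oscPrim_le ht σ x)
  · obtain ⟨r, hr, h0⟩ := h.zero
    refine (tendsto_const_nhds (x := (0:ℂ))).congr' ?_
    filter_upwards [self_mem_nhdsWithin, mem_nhdsWithin_of_mem_nhds (Iio_mem_nhds hr)] with y hy hy'
    simp [h0 y (le_of_lt hy) hy']
  · have := jt.zero_mul_isBoundedUnder_le (g := oscPrim t σ)
      ⟨4 / √|t|, eventually_map.2 (Eventually.of_forall fun x => oscPrim_le ht σ x)⟩
    exact this

/-! ### The two base estimates -/

lemma Amp.inv_bdd {η : ℝ → ℝ} (h : Amp η) {s : ℝ} (hs : s ≤ -2) :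
    ∃ M : ℝ, 0 < M ∧ ∀ x, 0 < x → |x ^ s * η x| ≤ M * (1 + x ^ 2)⁻¹ := by
  obtain ⟨M, hM, hb⟩ := h.rpow_bdd hs
  obtain ⟨M', hM', hb'⟩ := h.rpow_bdd (show s ≤ 0 by linarith)
  refine ⟨M + M', by positivity, fun x hx => ?_⟩
  have h1 := hb x hx
  have h2 := hb' x hx
  rw [rpow_zero, mul_one] at h2
  rw [rpow_neg hx.le, rpow_two, ← div_eq_mul_inv, le_div_iff₀ (by positivity)] at h1
  rw [← div_eq_mul_inv, le_div_iff₀ (by positivity)]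
  linarith

/-- Uniform bound of van der Corput type for amplitudes `x ^ (-k) η`, `k ≥ 0`. The derivative of
such an amplitude is `O((1 + x²)⁻¹)`; for `k = 0` this is because `η` is eventually constant. -/
lemma J_base_zero {η : ℝ → ℝ} (h : Amp η) (k : ℕ) :
    ∃ C : ℝ, 0 < C ∧ ∀ e t σ : ℝ, 0 < e → t ≠ 0 → ‖J t σ e (0 - k) η‖ ≤ C / √|t| := by
  obtain ⟨M, hM, hb⟩ : ∃ M : ℝ, 0 < M ∧ ∀ x, 0 < x →
      |x ^ ((0 - k : ℝ) - 1) * ((0 - k) * η x + x * deriv η x)| ≤ M * (1 + x ^ 2)⁻¹ := by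
    rcases Nat.eq_zero_or_pos k with rfl | hk
    · obtain ⟨M, hM, hb⟩ := h.xxderiv.inv_bdd le_rfl
      refine ⟨M, hM, fun x hx => ?_⟩
      refine le_of_eq_of_le ?_ (hb x hx)
      have e1 : ((0 - (0:ℕ) : ℝ) - 1) = -2 + 1 := by norm_num
      rw [e1, rpow_add_one hx.ne']
      congr 1; push_cast; ring
    · refine (h.lin h.xderiv (0 - k)).inv_bdd ?_
      have : (1:ℝ) ≤ k := by exact_mod_cast hk
      linarith
  obtain ⟨M', hM', hb'⟩ := h.rpow_bdd (show (0 - k : ℝ) ≤ 0 by simp)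
  refine ⟨4 * (M * (π / 2) + M'), by positivity, fun e t σ he ht => ?_⟩
  have hs : 0 < √|t| := sqrt_pos.2 (abs_pos.2 ht)
  have i1 : IntegrableOn (fun x : ℝ => M * (1 + x ^ 2)⁻¹) (Ioi 0) :=
    (integrable_inv_one_add_sq.const_mul M).integrableOn
  have i2 : IntegrableOn (fun x : ℝ => M' * (e * Real.exp (-e * x))) (Ioi 0) :=
    ((integrableOn_exp_mul_Ioi (by linarith : -e < 0) 0).const_mul e).const_mul M'
  refine (J_le_of_bound h he ht σ (0 - k)
    (B := fun x => 4 / √|t| * (M * (1 + x ^ 2)⁻¹ + M' * (e * Real.exp (-e * x))))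
    ((i1.add i2).const_mul _) ?_).trans (le_of_eq ?_)
  · intro x hx
    have h1 := hb x hx
    have h2 := hb' x hx
    rw [rpow_zero, mul_one] at h2
    rw [mul_comm M']
    gcongr
    exact oscPrim_le ht σ x
  · rw [integral_const_mul, integral_add i1 i2, integral_const_mul, integral_const_mul,
      integral_const_mul, integral_exp_mul_Ioi (by linarith), integral_Ioi_inv_one_add_sq]
    simp
    field_simp

lemma integral_ind_Ioi {D : ℝ} (hD : 0 < D) :
    IntegrableOn ((Ioi D).indicator fun x : ℝ => x ^ (-(3/2) : ℝ)) (Ioi 0) ∧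
    ∫ x in Ioi (0:ℝ), (Ioi D).indicator (fun x : ℝ => x ^ (-(3/2) : ℝ)) x = 2 / √D := by
  constructor
  · refine Integrable.integrableOn ?_
    rw [integrable_indicator_iff measurableSet_Ioi]
    exact integrableOn_Ioi_rpow_of_lt (by norm_num) hD
  · rw [setIntegral_indicator measurableSet_Ioi, inter_eq_right.2 (Ioi_subset_Ioi hD.le),
      integral_Ioi_rpow_of_lt (by norm_num) hD, sqrt_eq_rpow]
    rw [show (-(3/2) + 1 : ℝ) = -(1/2) by norm_num, rpow_neg hD.le]
    field_simp

lemma integral_ind_Iic {A : ℝ} (hA : 0 < A) :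
    IntegrableOn ((Iic A).indicator fun x : ℝ => x ^ (-(1/2) : ℝ)) (Ioi 0) ∧
    ∫ x in Ioi (0:ℝ), (Iic A).indicator (fun x : ℝ => x ^ (-(1/2) : ℝ)) x = 2 * √A := by
  constructor
  · rw [IntegrableOn, integrable_indicator_iff measurableSet_Iic, IntegrableOn,
      Measure.restrict_restrict measurableSet_Iic, inter_comm, Ioi_inter_Iic]
    have := intervalIntegral.intervalIntegrable_rpow' (a := 0) (b := A) (r := -(1/2)) (by norm_num)
    rwa [intervalIntegrable_iff_integrableOn_Ioc_of_le hA.le] at this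
  · rw [setIntegral_indicator measurableSet_Iic, Ioi_inter_Iic,
      ← intervalIntegral.integral_of_le hA.le, integral_rpow (Or.inl (by norm_num)), sqrt_eq_rpow]
    rw [show (-(1/2) + 1 : ℝ) = 1/2 by norm_num, zero_rpow (by norm_num)]
    field_simp; ring

/-- Amplitudes of order at most `-1/2` give `O(|σ| ^ (-1/2))`, uniformly in `t` and `e`. After one
integration by parts the integrand is at most a constant times `x ^ (-3/2) |oscPrim t σ x|`, and
`oscPrim` is bounded by `x` on `x ≤ 1/|σ|`, by `4/|σ|` before the scale `|σ|/(4|t|)` of the stationary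
point, and by `4/√|t|` beyond it. -/
lemma J_base_half {η : ℝ → ℝ} (h : Amp η) {s : ℝ} (hs : s ≤ -(1/2)) :
    ∃ C : ℝ, 0 < C ∧ ∀ e t σ : ℝ, 0 < e → t ≠ 0 → σ ≠ 0 → ‖J t σ e s η‖ ≤ C / √|σ| := by
  obtain ⟨M, hM, hb⟩ := (h.lin h.xderiv s).rpow_bdd (show s - 1 ≤ -(3/2) by linarith)
  obtain ⟨M', hM', hb'⟩ := h.rpow_bdd hs
  refine ⟨(M + M') * 26, by positivity, fun e t σ he ht hσ => ?_⟩
  have ht' : 0 < |t| := abs_pos.2 ht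
  have hσ' : 0 < |σ| := abs_pos.2 hσ
  obtain ⟨iA, eA⟩ := integral_ind_Iic (A := 1 / |σ|) (by positivity)
  obtain ⟨iB, eB⟩ := integral_ind_Ioi (D := 1 / |σ|) (by positivity)
  obtain ⟨iD, eD⟩ := integral_ind_Ioi (D := |σ| / (4 * |t|)) (by positivity)
  have iB' := iB.const_mul (4 / |σ|)
  have iD' := iD.const_mul (4 / √|t|)
  have iBD := iB'.add iD'
  simp only [Pi.add_def] at iBD
  have iABD := iA.add iBD
  simp only [Pi.add_def] at iABD
  refine (J_le_of_bound h he ht σ s (iABD.const_mul (M + M')) ?_).trans (le_of_eq ?_)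
  · intro x hx
    have h1 := hb x hx
    have h2 : e * Real.exp (-e * x) * |x ^ s * η x| ≤ M' * x ^ (-(3/2) : ℝ) := by
      -- `y e^{-y} ≤ 1` with `y = e x` makes the bound independent of `e`
      have h3 : x * (e * Real.exp (-e * x)) ≤ 1 := by
        have h4 := Real.add_one_le_exp (e * x)
        have h5 : Real.exp (-e * x) * Real.exp (e * x) = 1 := by
          rw [← Real.exp_add]; simp
        have h6 : Real.exp (-e * x) * (e * x) ≤ Real.exp (-e * x) * Real.exp (e * x) := by
          gcongr; linarith
        linarith
      have h7 : x ^ (-(1/2) : ℝ) = x ^ (-(3/2) : ℝ) * x := by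
        rw [← rpow_add_one hx.ne']; norm_num
      calc e * Real.exp (-e * x) * |x ^ s * η x|
          ≤ e * Real.exp (-e * x) * (M' * x ^ (-(1/2) : ℝ)) := by gcongr; exact hb' x hx
        _ = (x * (e * Real.exp (-e * x))) * (M' * x ^ (-(3/2) : ℝ)) := by rw [h7]; ring
        _ ≤ 1 * (M' * x ^ (-(3/2) : ℝ)) := by gcongr
        _ = _ := one_mul _
    have h8 : ‖oscPrim t σ x‖ * x ^ (-(3/2) : ℝ) ≤
        (Iic (1 / |σ|)).indicator (fun x : ℝ => x ^ (-(1/2) : ℝ)) x +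
        (4 / |σ| * (Ioi (1 / |σ|)).indicator (fun x : ℝ => x ^ (-(3/2) : ℝ)) x +
        4 / √|t| * (Ioi (|σ| / (4 * |t|))).indicator (fun x : ℝ => x ^ (-(3/2) : ℝ)) x) := by
      have hp : 0 < x ^ (-(3/2) : ℝ) := rpow_pos_of_pos hx _
      have n1 : 0 ≤ (Iic (1 / |σ|)).indicator (fun x : ℝ => x ^ (-(1/2) : ℝ)) x := by
        apply indicator_apply_nonneg; intro _; positivity
      have n2 : 0 ≤ 4 / |σ| * (Ioi (1 / |σ|)).indicator (fun x : ℝ => x ^ (-(3/2) : ℝ)) x := by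
        refine mul_nonneg (by positivity) (indicator_apply_nonneg fun _ => hp.le)
      have n3 : 0 ≤ 4 / √|t| *
          (Ioi (|σ| / (4 * |t|))).indicator (fun x : ℝ => x ^ (-(3/2) : ℝ)) x := by
        refine mul_nonneg (by positivity) (indicator_apply_nonneg fun _ => hp.le)
      rcases le_or_gt x (|σ| / (4 * |t|)) with hD | hD
      · rcases le_or_gt x (1 / |σ|) with hA | hA
        · have : ‖oscPrim t σ x‖ * x ^ (-(3/2) : ℝ) ≤ x ^ (-(1/2) : ℝ) := by
            have h7 : x ^ (-(1/2) : ℝ) = x * x ^ (-(3/2) : ℝ) := by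
              rw [mul_comm, ← rpow_add_one hx.ne']; norm_num
            rw [h7]; gcongr; exact oscPrim_le_self t σ hx.le
          rw [indicator_of_mem (show x ∈ Iic (1 / |σ|) from hA)]
          linarith
        · have : ‖oscPrim t σ x‖ * x ^ (-(3/2) : ℝ) ≤ 4 / |σ| * x ^ (-(3/2) : ℝ) := by
            gcongr; exact oscPrim_le_inv ht hσ hx.le hD
          rw [indicator_of_mem (show x ∈ Ioi (1 / |σ|) from hA)]
          linarith
      · have : ‖oscPrim t σ x‖ * x ^ (-(3/2) : ℝ) ≤ 4 / √|t| * x ^ (-(3/2) : ℝ) := by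
          gcongr; exact oscPrim_le ht σ x
        rw [indicator_of_mem (show x ∈ Ioi (|σ| / (4 * |t|)) from hD)]
        linarith
    calc _ ≤ ‖oscPrim t σ x‖ * (M * x ^ (-(3/2) : ℝ) + M' * x ^ (-(3/2) : ℝ)) := by gcongr
      _ = (M + M') * (‖oscPrim t σ x‖ * x ^ (-(3/2) : ℝ)) := by ring
      _ ≤ _ := by gcongr
  · rw [integral_const_mul, integral_add iA iBD, integral_add iB' iD', integral_const_mul,
      integral_const_mul, eA, eB, eD]
    have q1 : √(1 / |σ|) = 1 / √|σ| := by rw [sqrt_div zero_le_one, sqrt_one]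
    have q2 : √(|σ| / (4 * |t|)) = √|σ| / (2 * √|t|) := by
      rw [sqrt_div hσ'.le, sqrt_mul (by norm_num)]
      congr 2
      rw [show (4:ℝ) = 2 ^ 2 by norm_num, sqrt_sq (by norm_num)]
    rw [q1, q2]
    have p1 : 0 < √|t| := sqrt_pos.2 ht'
    have p2 : 0 < √|σ| := sqrt_pos.2 hσ'
    have p3 : |σ| = √|σ| ^ 2 := (sq_sqrt hσ'.le).symm
    generalize √|σ| = y at *
    rw [p3]
    field_simp
    ring

/-! ### Induction on the order -/

/-- The estimate of order `b`: for every amplitude `x ^ (b - k) η` the regularized integral has a limit,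
which is `O(|t| ^ (-1/2 - b) ⟨σ⟩ ^ b)`. The lower orders `b - k` are included so that the statement is
stable under the order-lowering recursion. -/
def Est (b : ℝ) : Prop :=
  ∀ (k : ℕ) (η : ℝ → ℝ), Amp η → ∃ C : ℝ, 0 < C ∧ ∀ t : ℝ, t ≠ 0 → ∀ σ : ℝ, ∃ L : ℂ,
    Tendsto (fun e => J t σ e (b - k) η) (𝓝[>] 0) (𝓝 L) ∧
      ‖L‖ ≤ C * |t| ^ (-(1/2) - b) * jbR σ ^ b

lemma one_le_jbR (σ : ℝ) : 1 ≤ jbR σ := by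
  rw [jbR, le_sqrt (by norm_num)] <;> nlinarith [sq_nonneg σ]

lemma abs_le_jbR (σ : ℝ) : |σ| ≤ jbR σ := by
  rw [jbR]; apply le_sqrt_of_sq_le; rw [sq_abs]; linarith

lemma exists_lim {η : ℝ → ℝ} (h : Amp η) (s : ℝ) {t : ℝ} (ht : t ≠ 0) (σ : ℝ) :
    ∃ L : ℂ, Tendsto (fun e => J t σ e s η) (𝓝[>] 0) (𝓝 L) := by
  obtain ⟨m, hm⟩ := exists_nat_gt (s + 1)
  exact J_lim_exists m h (by linarith) ht σ

lemma norm_rec (t σ : ℝ) (L₁ L₂ : ℂ) :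
    ‖(1 / (2 * t) : ℂ) * (Complex.I * L₂ - σ * L₁)‖ ≤ |t|⁻¹ * (‖L₂‖ + |σ| * ‖L₁‖) := by
  rw [norm_mul]
  have h1 : ‖(1 / (2 * t) : ℂ)‖ ≤ |t|⁻¹ := by
    rw [norm_div, norm_mul, Complex.norm_real, norm_eq_abs]
    simp
    have : 0 ≤ |t|⁻¹ := by positivity
    linarith
  gcongr
  refine (norm_sub_le _ _).trans (le_of_eq ?_)
  rw [norm_mul, norm_mul, Complex.norm_I, Complex.norm_real, norm_eq_abs, one_mul]

lemma est_zero : Est 0 := by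
  intro k η h
  obtain ⟨C, hC, hb⟩ := J_base_zero h k
  refine ⟨C, hC, fun t ht σ => ?_⟩
  obtain ⟨L, hL⟩ := exists_lim h (0 - k) ht σ
  refine ⟨L, hL, ?_⟩
  rw [rpow_zero, mul_one, sub_zero, rpow_neg (abs_nonneg t), ← sqrt_eq_rpow, ← div_eq_mul_inv]
  refine le_of_tendsto hL.norm ?_
  filter_upwards [self_mem_nhdsWithin] with e he using hb e t σ he ht

lemma est_half : Est (1/2) := by
  intro k η h
  have hk : (0:ℝ) ≤ k := k.cast_nonneg
  obtain ⟨C₁, hC₁, hb₁⟩ := J_base_half h (s := 1/2 - k - 1) (by linarith)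
  obtain ⟨C₂, hC₂, hb₂⟩ := J_lim_low (h.lin h.xderiv (1/2 - k - 1)) (s := 1/2 - k - 2) (by linarith)
  refine ⟨C₂ + C₁, by positivity, fun t ht σ => ?_⟩
  obtain ⟨L₂, hL₂, hn₂⟩ := hb₂ t σ
  obtain ⟨L₁, hL₁⟩ := exists_lim h (1/2 - k - 1) ht σ
  refine ⟨_, J_lim_rec h ht hL₂ hL₁, (norm_rec t σ L₁ L₂).trans ?_⟩
  have hn₁ : |σ| * ‖L₁‖ ≤ C₁ * √|σ| := by
    rcases eq_or_ne σ 0 with rfl | hσ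
    · simp
    · have : ‖L₁‖ ≤ C₁ / √|σ| := by
        refine le_of_tendsto hL₁.norm ?_
        filter_upwards [self_mem_nhdsWithin] with e he using hb₁ e t σ he ht hσ
      have hσ' : 0 < √|σ| := sqrt_pos.2 (abs_pos.2 hσ)
      calc |σ| * ‖L₁‖ ≤ |σ| * (C₁ / √|σ|) := by gcongr
        _ = (√|σ| * √|σ|) * (C₁ / √|σ|) := by rw [mul_self_sqrt (abs_nonneg σ)]
        _ = _ := by field_simp
  rw [show (-(1/2) - 1/2 : ℝ) = -1 by norm_num, rpow_neg_one, ← sqrt_eq_rpow]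
  have q1 : 1 ≤ √(jbR σ) := one_le_sqrt.2 (one_le_jbR σ)
  have q2 : √|σ| ≤ √(jbR σ) := sqrt_le_sqrt (abs_le_jbR σ)
  calc |t|⁻¹ * (‖L₂‖ + |σ| * ‖L₁‖) ≤ |t|⁻¹ * (C₂ * √(jbR σ) + C₁ * √(jbR σ)) := by
        refine mul_le_mul_of_nonneg_left (add_le_add ?_ ?_) (by positivity)
        · exact hn₂.trans (le_mul_of_one_le_right hC₂.le q1)
        · exact hn₁.trans (by gcongr)
    _ = _ := by ring

lemma Est.succ {b : ℝ} (hE : Est b) : Est (b + 1) := by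
  intro k η h
  obtain ⟨C₁, hC₁, hb₁⟩ := hE k η h
  obtain ⟨C₂, hC₂, hb₂⟩ := hE (k + 1) _ (h.lin h.xderiv (b + 1 - k - 1))
  refine ⟨C₂ + C₁, by positivity, fun t ht σ => ?_⟩
  obtain ⟨L₁, hL₁, hn₁⟩ := hb₁ t ht σ
  obtain ⟨L₂, hL₂, hn₂⟩ := hb₂ t ht σ
  rw [show b - k = b + 1 - k - 1 by ring] at hL₁
  rw [show b - (k + 1 : ℕ) = b + 1 - k - 2 by push_cast; ring] at hL₂
  refine ⟨_, J_lim_rec h ht hL₂ hL₁, (norm_rec t σ L₁ L₂).trans ?_⟩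
  have ht' : 0 < |t| := abs_pos.2 ht
  have hj := one_le_jbR σ
  have hj0 : 0 < jbR σ := by linarith
  have e1 : |t| ^ (-(1/2) - (b + 1)) = |t|⁻¹ * |t| ^ (-(1/2) - b) := by
    rw [← rpow_neg_one, ← rpow_add ht']; congr 1; ring
  rw [e1, rpow_add_one hj0.ne']
  have p1 : 0 ≤ |t| ^ (-(1/2) - b) * jbR σ ^ b := by positivity
  calc |t|⁻¹ * (‖L₂‖ + |σ| * ‖L₁‖)
      ≤ |t|⁻¹ * ((C₂ * |t| ^ (-(1/2) - b) * jbR σ ^ b) * jbR σ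
          + jbR σ * (C₁ * |t| ^ (-(1/2) - b) * jbR σ ^ b)) := by
        gcongr
        · exact hn₂.trans (le_mul_of_one_le_right (by positivity) hj)
        · exact abs_le_jbR σ
    _ = _ := by ring

lemma est_add {b : ℝ} (hE : Est b) (m : ℕ) : Est (b + m) := by
  induction m with
  | zero => simpa using hE
  | succ m ih => rw [Nat.cast_succ, ← add_assoc]; exact ih.succ

lemma amp_of_chi {a : ℝ} (ha : 0 < a) {χ : ℝ → ℝ} (hχ : IsChi a χ) : Amp (fun x => χ (x ^ 2)) := by
  obtain ⟨hs, hsupp, h1⟩ := hχ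
  refine ⟨hs.comp (contDiff_id.pow 2), ⟨√a, sqrt_pos.2 ha, fun x hx hxa => ?_⟩,
    ⟨√(2 * a), 1, fun x hx => h1 _ (lt_sq_of_sqrt_lt hx).le⟩⟩
  by_contra hne
  have h2 : a ≤ x ^ 2 := hsupp hne
  exact absurd hxa (not_lt.2 (sqrt_le_iff.2 ⟨hx, h2⟩))

/-- **estimate (5.33).** For `n ≥ 4`, `a > 0` and a cutoff `χ_a`, the
(Abel-regularized) oscillatory integral `∫₀^∞ e^{itλ² + iσλ} λ^{(n-1)/2} χ_a(λ²) dλ`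
exists and satisfies `|∫₀^∞ e^{itλ² + iσλ} λ^{(n-1)/2} χ_a(λ²) dλ| ≤ C |t|^{-n/2} ⟨σ⟩^{(n-1)/2}`
for all `t ≠ 0` and all `σ ∈ ℝ`, with `C` independent of `t` and `σ`. -/
theorem oscillatory_integral_bound
    (n : ℕ) (hn : 4 ≤ n) (a : ℝ) (ha : 0 < a) (χ : ℝ → ℝ) (hχ : IsChi a χ) :
    ∃ C : ℝ, 0 < C ∧ ∀ t : ℝ, t ≠ 0 → ∀ σ : ℝ,
      ∃ L : ℂ,
        Tendsto (fun e : ℝ =>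
            ∫ lam in Set.Ioi (0 : ℝ),
              Complex.exp (Complex.I * (t * lam ^ 2 + σ * lam)) *
                Real.exp (-e * lam) *
                ((lam ^ (((n : ℝ) - 1) / 2) * χ (lam ^ 2) : ℝ) : ℂ))
          (𝓝[>] (0 : ℝ)) (𝓝 L) ∧
        ‖L‖ ≤ C * |t| ^ (-(n : ℝ) / 2) * jbR σ ^ (((n : ℝ) - 1) / 2) := by
  have hE : Est (((n : ℝ) - 1) / 2) := by
    rcases Nat.even_or_odd' n with ⟨m, rfl | rfl⟩
    · obtain ⟨l, rfl⟩ : ∃ l, m = l + 1 := ⟨m - 1, by omega⟩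
      convert est_add est_half l using 1
      push_cast; ring
    · convert est_add est_zero m using 1
      push_cast; ring
  obtain ⟨C, hC, h⟩ := hE 0 _ (amp_of_chi ha hχ)
  refine ⟨C, hC, fun t ht σ => ?_⟩
  obtain ⟨L, hL, hn⟩ := h t ht σ
  refine ⟨L, ?_, ?_⟩
  · simpa only [J, osc, Nat.cast_zero, sub_zero] using hL
  · rwa [show -(1/2) - ((n : ℝ) - 1) / 2 = -(n : ℝ) / 2 by ring] at hn
end
end
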